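/- Let G be a discrete group acting amenably by α on a unital C*-algebra A. Then A⋊_{α,r}G is nuclear if and only if A is nuclear. -/

import Mathlib

noncomputable section

open scoped ComplexOrder
open Matrix
open scoped ENNReal

/-- Positivity of a matrix over a (possibly non-unital) C*-algebra:
`M` is positive iff it factors as `Nᴴ * N`. -/
def MatPos {R : Type*} [NonUnitalSemiring R] [StarRing R] {ν : Type*} [Fintype ν]
    (M : Matrix ν ν R) : Prop :=
  ∃ N : Matrix ν ν R, M = Nᴴ * N

/-- A linear map between C*-algebras is completely positive if all its matrix
amplifications preserve positivity. -/
def IsCompletelyPositive {R S : Type*} [NonUnitalSemiring R] [StarRing R] [Module ℂ R]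
    [NonUnitalSemiring S] [StarRing S] [Module ℂ S] (Φ : R →ₗ[ℂ] S) : Prop :=
  ∀ (n : ℕ) (M : Matrix (Fin n) (Fin n) R), MatPos M → MatPos (M.map Φ)

variable {H : Type*} [NormedAddCommGroup H] [InnerProductSpace ℂ H] [CompleteSpace H]

/-- The bounded operator on the Hilbert space `H ⊕₂ ⋯ ⊕₂ H` associated to an
operator-valued `n × n` matrix. -/
def matOp {ν : Type*} [Fintype ν] (M : Matrix ν ν (H →L[ℂ] H)) :
    PiLp 2 (fun _ : ν => H) →L[ℂ] PiLp 2 (fun _ : ν => H) :=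
  ((PiLp.continuousLinearEquiv 2 ℂ (fun _ : ν => H)).symm :
      (∀ _ : ν, H) →L[ℂ] PiLp 2 (fun _ : ν => H)) ∘L
    (ContinuousLinearMap.pi fun i =>
      (∑ j, (M i j) ∘L (ContinuousLinearMap.proj j)) ∘L
        ((PiLp.continuousLinearEquiv 2 ℂ (fun _ : ν => H)) :
          PiLp 2 (fun _ : ν => H) →L[ℂ] ∀ _ : ν, H))

variable {H : Type*} [NormedAddCommGroup H] [InnerProductSpace ℂ H] [CompleteSpace H]
variable {X : Type*}

/-- Evaluation at a point, as a continuous linear map `ℓ²(X,H) → H`. -/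
def lpEval (x : X) : lp (fun _ : X => H) 2 →L[ℂ] H :=
  LinearMap.mkContinuous
    { toFun := fun f => f x
      map_add' := fun f g => by
        have := lp.coeFn_add f g
        exact congrFun this x
      map_smul' := fun c f => by
        have := lp.coeFn_smul c f
        exact congrFun this x }
    1 (fun f => by
      simpa using lp.norm_apply_le_norm (by norm_num) f x)

/-- Inclusion of the `x`-th coordinate, as a continuous linear map `H → ℓ²(X,H)`. -/
def lpSingle (x : X) : H →L[ℂ] lp (fun _ : X => H) 2 := by
  classical
  exact LinearMap.mkContinuous
    { toFun := fun ξ => lp.single 2 x ξ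
      map_add' := fun ξ η => by
        apply lp.ext
        funext j
        by_cases h : j = x
        · subst h; simp [lp.single_apply_self]
        · simp [lp.single_apply_ne _ _ _ h, lp.coeFn_add]
      map_smul' := fun c ξ => by simp [lp.single_smul] }
    1 (fun ξ => by
      simpa using (lp.norm_single (p := 2) (by norm_num)
        (fun _ : X => ξ) x).le)

/-- The elementary operator `e_{x,y} ⊗ T` on `ℓ²(X,H)`. -/
def elemOp (x y : X) (T : H →L[ℂ] H) :
    lp (fun _ : X => H) 2 →L[ℂ] lp (fun _ : X => H) 2 :=
  (lpSingle x) ∘L T ∘L (lpEval y)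

/-- The operator `T_k` on `ℓ²(X,H)` associated with a finitely supported kernel
`k : X × X → B(H)`; it is (defined to be) `0` if `k` is not finitely supported. -/
def TOp (k : X × X → (H →L[ℂ] H)) :
    lp (fun _ : X => H) 2 →L[ℂ] lp (fun _ : X => H) 2 :=
  ∑ᶠ (p : X × X), elemOp p.1 p.2 (k p)

variable {G : Type*} [Group G]

/-- The left regular translation `λ_t` on `ℓ²(G,H)`. -/
def lam (t : G) : lp (fun _ : G => H) 2 →L[ℂ] lp (fun _ : G => H) 2 :=
  LinearMap.mkContinuous
    { toFun := fun f =>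
        ⟨fun s => f (t⁻¹ * s), by
          apply memℓp_gen
          have hf : Summable fun s => ‖f s‖ ^ (2 : ℝ≥0∞).toReal :=
            (lp.memℓp f).summable (by norm_num)
          exact ((Equiv.mulLeft t⁻¹).summable_iff
            (f := fun s => ‖f s‖ ^ (2 : ℝ≥0∞).toReal)).2 hf⟩
      map_add' := fun f g => by
        apply lp.ext; funext s
        exact congrFun (lp.coeFn_add f g) (t⁻¹ * s)
      map_smul' := fun c f => by
        apply lp.ext; funext s
        exact congrFun (lp.coeFn_smul c f) (t⁻¹ * s) }
    1 (fun f => by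
      rw [one_mul]
      refine lp.norm_le_of_tsum_le (by norm_num) (norm_nonneg f) ?_
      have h1 : ∑' (s : G), ‖f (t⁻¹ * s)‖ ^ (2 : ℝ≥0∞).toReal
          = ∑' (s : G), ‖f s‖ ^ (2 : ℝ≥0∞).toReal :=
        (Equiv.mulLeft t⁻¹).tsum_eq (fun s => ‖f s‖ ^ (2 : ℝ≥0∞).toReal)
      show ∑' (s : G), ‖f (t⁻¹ * s)‖ ^ (2 : ℝ≥0∞).toReal ≤ ‖f‖ ^ (2 : ℝ≥0∞).toReal
      rw [h1, ← lp.norm_rpow_eq_tsum (by norm_num) f])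

/-- The diagonal ("block multiplication") operator on `ℓ²(X,H)` associated with a
uniformly bounded family of operators. -/
def diagOp (T : X → (H →L[ℂ] H)) (C : ℝ) (hC : ∀ x, ‖T x‖ ≤ C) :
    lp (fun _ : X => H) 2 →L[ℂ] lp (fun _ : X => H) 2 := by
  have hC' : ∀ x, ‖T x‖ ≤ max C 0 := fun x => (hC x).trans (le_max_left _ _)
  have hr : (0:ℝ) < (2 : ℝ≥0∞).toReal := by norm_num
  have key : ∀ (f : lp (fun _ : X => H) 2) (x : X),
      ‖T x (f x)‖ ^ (2 : ℝ≥0∞).toReal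
        ≤ (max C 0) ^ (2 : ℝ≥0∞).toReal * ‖f x‖ ^ (2 : ℝ≥0∞).toReal := by
    intro f x
    have h1 : ‖T x (f x)‖ ≤ max C 0 * ‖f x‖ :=
      ((T x).le_opNorm (f x)).trans
        (mul_le_mul_of_nonneg_right (hC' x) (norm_nonneg _))
    calc ‖T x (f x)‖ ^ (2 : ℝ≥0∞).toReal
        ≤ (max C 0 * ‖f x‖) ^ (2 : ℝ≥0∞).toReal :=
          Real.rpow_le_rpow (norm_nonneg _) h1 hr.le
      _ = (max C 0) ^ (2 : ℝ≥0∞).toReal * ‖f x‖ ^ (2 : ℝ≥0∞).toReal :=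
          Real.mul_rpow (le_max_right _ _) (norm_nonneg _)
  have mem : ∀ f : lp (fun _ : X => H) 2, Memℓp (fun x => T x (f x)) 2 := by
    intro f
    apply memℓp_gen
    exact Summable.of_nonneg_of_le
      (fun x => Real.rpow_nonneg (norm_nonneg _) _) (key f)
      (((lp.memℓp f).summable hr).mul_left _)
  exact LinearMap.mkContinuous
    { toFun := fun f => ⟨fun x => T x (f x), mem f⟩
      map_add' := fun f g => by
        apply lp.ext; funext x
        have := congrFun (lp.coeFn_add f g) x
        show T x ((f + g) x) = _
        rw [this]
        exact map_add (T x) (f x) (g x)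
      map_smul' := fun c f => by
        apply lp.ext; funext x
        have := congrFun (lp.coeFn_smul c f) x
        show T x ((c • f) x) = _
        rw [this]
        simp [lp.coeFn_smul] }
    (max C 0) (fun f => by
      refine lp.norm_le_of_tsum_le hr (by positivity) ?_
      show ∑' (x : X), ‖T x (f x)‖ ^ (2 : ℝ≥0∞).toReal ≤ _
      calc ∑' (x : X), ‖T x (f x)‖ ^ (2 : ℝ≥0∞).toReal
          ≤ ∑' (x : X), (max C 0) ^ (2 : ℝ≥0∞).toReal * ‖f x‖ ^ (2 : ℝ≥0∞).toReal :=
            Summable.tsum_le_tsum (key f)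
              (Summable.of_nonneg_of_le
                (fun x => Real.rpow_nonneg (norm_nonneg _) _) (key f)
                (((lp.memℓp f).summable hr).mul_left _))
              (((lp.memℓp f).summable hr).mul_left _)
        _ = (max C 0) ^ (2 : ℝ≥0∞).toReal * ∑' (x : X), ‖f x‖ ^ (2 : ℝ≥0∞).toReal :=
            tsum_mul_left
        _ = (max C 0) ^ (2 : ℝ≥0∞).toReal * ‖f‖ ^ (2 : ℝ≥0∞).toReal := by
            rw [lp.norm_rpow_eq_tsum hr]
        _ = (max C 0 * ‖f‖) ^ (2 : ℝ≥0∞).toReal :=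
            (Real.mul_rpow (by positivity) (norm_nonneg _)).symm)

section CB

variable {A' B' : Type*} [AddCommMonoid A'] [Module ℂ A'] [AddCommMonoid B'] [Module ℂ B']
variable {K : Type*} [NormedAddCommGroup K] [InnerProductSpace ℂ K] [CompleteSpace K]

/-- All matrix amplifications of `Φ` are bounded by `C`, where matrices over the abstract
spaces are normed through the given embeddings into concrete operator algebras. -/
def CBBound (ιA : A' → (H →L[ℂ] H)) (ιB : B' → (K →L[ℂ] K))
    (Φ : A' →ₗ[ℂ] B') (C : ℝ) : Prop :=
  ∀ (n : ℕ) (M : Matrix (Fin n) (Fin n) A'),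
    ‖matOp (M.map (fun a => ιB (Φ a)))‖ ≤ C * ‖matOp (M.map ιA)‖

/-- Complete boundedness of a linear map, relative to embeddings of its domain and
codomain into concrete operator algebras. -/
def IsCB (ιA : A' → (H →L[ℂ] H)) (ιB : B' → (K →L[ℂ] K)) (Φ : A' →ₗ[ℂ] B') : Prop :=
  ∃ C : ℝ, 0 ≤ C ∧ CBBound ιA ιB Φ C

/-- The completely bounded norm of a linear map, relative to embeddings of its domain
and codomain into concrete operator algebras. -/
def cbNorm (ιA : A' → (H →L[ℂ] H)) (ιB : B' → (K →L[ℂ] K)) (Φ : A' →ₗ[ℂ] B') : ℝ :=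
  sInf { C : ℝ | 0 ≤ C ∧ CBBound ιA ιB Φ C }

end CB

section Schur

variable {A : Type*} [NonUnitalCStarAlgebra A]

/-- A *-representation is non-degenerate if the span of the vectors in its range is dense. -/
def NondegenerateRep {K : Type*} [NormedAddCommGroup K] [InnerProductSpace ℂ K]
    [CompleteSpace K] (ρ : A →⋆ₙₐ[ℂ] (K →L[ℂ] K)) : Prop :=
  Dense (Submodule.span ℂ {ξ : K | ∃ (a : A) (v : K), ρ a v = ξ} : Set K)

/-- A function `φ : X × X → CB(A, B(H))` is of positive type if it maps positive
matrices to positive matrices, entrywise. -/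
def PositiveType (φ : X → X → (A →ₗ[ℂ] (H →L[ℂ] H))) : Prop :=
  ∀ (m : ℕ) (x : Fin m → X) (a : Matrix (Fin m) (Fin m) A),
    MatPos a → MatPos (Matrix.of fun p q => φ (x p) (x q) (a p q))

/-- A kernel `k : X × X → A` is positive definite if all the matrices obtained by
sampling it at finitely many points are positive. -/
def PosDefKernel (k : X × X → A) : Prop :=
  ∀ (n : ℕ) (x : Fin n → X), MatPos (Matrix.of fun i j => k (x i, x j))

/-- The operator `T_k` on `ℓ²(X,H)` of a kernel `k : X × X → A`, via the embedding
`ι : A → B(H)` (it is `0` unless `k` is finitely supported). -/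
def TKer (ι : A →⋆ₙₐ[ℂ] (H →L[ℂ] H)) (k : X × X → A) :
    lp (fun _ : X => H) 2 →L[ℂ] lp (fun _ : X => H) 2 :=
  TOp (fun p => ι (k p))

/-- `C` is a complete bound for the Schur multiplication map `S_φ : T_k ↦ T_{φ·k}`,
tested on (matrices of) finitely supported kernels, which span a dense subspace of
`K(ℓ²(X)) ⊗ A`. -/
def SchurBound (ι : A →⋆ₙₐ[ℂ] (H →L[ℂ] H)) (φ : X → X → (A →ₗ[ℂ] (H →L[ℂ] H)))
    (C : ℝ) : Prop :=
  ∀ (n : ℕ) (k : Fin n → Fin n → (X × X → A)),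
    (∀ i j, (Function.support (k i j)).Finite) →
    ‖matOp (Matrix.of fun i j => TOp (fun p => φ p.1 p.2 (k i j p)))‖
      ≤ C * ‖matOp (Matrix.of fun i j => TKer ι (k i j))‖

/-- `φ` is a Schur `A`-multiplier: the map `S_φ : T_k ↦ T_{φ·k}` is completely bounded. -/
def IsSchurMultiplier (ι : A →⋆ₙₐ[ℂ] (H →L[ℂ] H))
    (φ : X → X → (A →ₗ[ℂ] (H →L[ℂ] H))) : Prop :=
  ∃ C : ℝ, 0 ≤ C ∧ SchurBound ι φ C

/-- The multiplier norm `‖φ‖_m = ‖S_φ‖_cb` of a Schur `A`-multiplier. -/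
def schurNorm (ι : A →⋆ₙₐ[ℂ] (H →L[ℂ] H))
    (φ : X → X → (A →ₗ[ℂ] (H →L[ℂ] H))) : ℝ :=
  sInf { C : ℝ | 0 ≤ C ∧ SchurBound ι φ C }

/-- Complete positivity of the map `S_φ : K(ℓ²(X)) ⊗ A → K(ℓ²(X)) ⊗ B(H)`, tested on
(matrices of) finitely supported kernels. -/
def SchurCP (ι : A →⋆ₙₐ[ℂ] (H →L[ℂ] H)) (φ : X → X → (A →ₗ[ℂ] (H →L[ℂ] H))) : Prop :=
  ∀ (n : ℕ) (k : Fin n → Fin n → (X × X → A)),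
    (∀ i j, (Function.support (k i j)).Finite) →
    MatPos (Matrix.of fun i j => TKer ι (k i j)) →
    MatPos (Matrix.of fun i j => TOp (fun p => φ p.1 p.2 (k i j p)))

end Schur

section Dynamics

variable {A : Type*} [NonUnitalCStarAlgebra A]

/-- `α` is an action of the group `G` on `A` by *-automorphisms. -/
def IsAction (α : G → A ≃⋆ₐ[ℂ] A) : Prop :=
  (∀ a, α 1 a = a) ∧ ∀ s t : G, ∀ a : A, α (s * t) a = α s (α t a)

/-- A *-automorphism of `A`, as a `ℂ`-linear map. -/
def autLin (e : A ≃⋆ₐ[ℂ] A) : A →ₗ[ℂ] A :=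
  { toFun := e
    map_add' := fun a b => map_add e a b
    map_smul' := fun c a => map_smul e c a }

/-- The representation `π` of `A` on `ℓ²(G,H)`: `(π(a)ξ)(s) = α_{s⁻¹}(a)(ξ(s))`. -/
def piRep (ι : A →⋆ₙₐ[ℂ] (H →L[ℂ] H)) (α : G → A ≃⋆ₐ[ℂ] A) (a : A) :
    lp (fun _ : G => H) 2 →L[ℂ] lp (fun _ : G => H) 2 :=
  diagOp (fun s => ι (α s⁻¹ a)) ‖a‖ (fun s =>
    (NonUnitalStarAlgHom.norm_apply_le ι (α s⁻¹ a)).trans_eq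
      (StarAlgEquiv.norm_map (α s⁻¹) a))

/-- The reduced crossed product `A ⋊_{α,r} G`, realised concretely on `ℓ²(G,H)` as the
norm closure of the linear span of the operators `π(a)λ_t`. -/
def CrossedSet (ι : A →⋆ₙₐ[ℂ] (H →L[ℂ] H)) (α : G → A ≃⋆ₐ[ℂ] A) :
    Set (lp (fun _ : G => H) 2 →L[ℂ] lp (fun _ : G => H) 2) :=
  closure (Submodule.span ℂ
    {x | ∃ (a : A) (t : G), x = piRep ι α a * lam t} : Set _)

/-- `E` is the canonical conditional expectation of the reduced crossed product onto `A`: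
it is characterised by `ι (E x) = (x)_{e,e}`, the `(e,e)` matrix entry of `x`. -/
def IsCondExp (ι : A →⋆ₙₐ[ℂ] (H →L[ℂ] H)) (α : G → A ≃⋆ₐ[ℂ] A)
    (E : (lp (fun _ : G => H) 2 →L[ℂ] lp (fun _ : G => H) 2) →ₗ[ℂ] A) : Prop :=
  ∀ x ∈ CrossedSet ι α, ι (E x) = (lpEval (1 : G)) ∘L x ∘L (lpSingle (1 : G))

/-- The defining property of the map `S_F` associated with `F : G → CB(A)`:
`S_F(π(a)λ_s) = π(F(s)(a))λ_s`. -/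
def HSGenProp (ι : A →⋆ₙₐ[ℂ] (H →L[ℂ] H)) (α : G → A ≃⋆ₐ[ℂ] A)
    (F : G → (A →ₗ[ℂ] A))
    (Φ : (lp (fun _ : G => H) 2 →L[ℂ] lp (fun _ : G => H) 2) →ₗ[ℂ]
         (lp (fun _ : G => H) 2 →L[ℂ] lp (fun _ : G => H) 2)) : Prop :=
  ∀ (a : A) (s : G), Φ (piRep ι α a * lam s) = piRep ι α (F s a) * lam s

/-- `Φ` maps the reduced crossed product into itself and, on matrices over the reduced
crossed product, all amplifications of `Φ` are bounded by `C`. -/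
def CBBoundOnCrossed (ι : A →⋆ₙₐ[ℂ] (H →L[ℂ] H)) (α : G → A ≃⋆ₐ[ℂ] A)
    (Φ : (lp (fun _ : G => H) 2 →L[ℂ] lp (fun _ : G => H) 2) →ₗ[ℂ]
         (lp (fun _ : G => H) 2 →L[ℂ] lp (fun _ : G => H) 2)) (C : ℝ) : Prop :=
  ∀ (n : ℕ) (M : Matrix (Fin n) (Fin n)
      (lp (fun _ : G => H) 2 →L[ℂ] lp (fun _ : G => H) 2)),
    (∀ i j, M i j ∈ CrossedSet ι α) →
      ‖matOp (M.map Φ)‖ ≤ C * ‖matOp M‖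

/-- `Φ` is completely positive on the reduced crossed product: matrices over the crossed
product which are positive are mapped to positive matrices. -/
def CPOnCrossed (ι : A →⋆ₙₐ[ℂ] (H →L[ℂ] H)) (α : G → A ≃⋆ₐ[ℂ] A)
    (Φ : (lp (fun _ : G => H) 2 →L[ℂ] lp (fun _ : G => H) 2) →ₗ[ℂ]
         (lp (fun _ : G => H) 2 →L[ℂ] lp (fun _ : G => H) 2)) : Prop :=
  (∀ x ∈ CrossedSet ι α, Φ x ∈ CrossedSet ι α) ∧
  ∀ (n : ℕ) (M : Matrix (Fin n) (Fin n)
      (lp (fun _ : G => H) 2 →L[ℂ] lp (fun _ : G => H) 2)),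
    (∀ i j, M i j ∈ CrossedSet ι α) → MatPos M → MatPos (M.map Φ)

/-- `F : G → CB(A)` is a Herz-Schur `(A,G,α)`-multiplier: the map `S_F` determined by
`S_F(π(a)λ_s) = π(F(s)(a))λ_s` extends to a completely bounded map on `A ⋊_{α,r} G`. -/
def IsHerzSchurMultiplier (ι : A →⋆ₙₐ[ℂ] (H →L[ℂ] H)) (α : G → A ≃⋆ₐ[ℂ] A)
    (F : G → (A →ₗ[ℂ] A)) : Prop :=
  ∃ Φ, HSGenProp ι α F Φ ∧ (∀ x ∈ CrossedSet ι α, Φ x ∈ CrossedSet ι α) ∧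
    ∃ C : ℝ, 0 ≤ C ∧ CBBoundOnCrossed ι α Φ C

/-- `F : G → CB(A)` is a completely positive Herz-Schur `(A,G,α)`-multiplier: the map
`S_F` extends to a completely positive (hence completely bounded) map on `A ⋊_{α,r} G`. -/
def IsHerzSchurMultiplierCP (ι : A →⋆ₙₐ[ℂ] (H →L[ℂ] H)) (α : G → A ≃⋆ₐ[ℂ] A)
    (F : G → (A →ₗ[ℂ] A)) : Prop :=
  ∃ Φ, HSGenProp ι α F Φ ∧ CPOnCrossed ι α Φ ∧
    ∃ C : ℝ, 0 ≤ C ∧ CBBoundOnCrossed ι α Φ C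

/-- The function `N(F) : G × G → CB(A)`, `N(F)(s,t)(a) = α_{s⁻¹}(F(st⁻¹)(α_s(a)))`. -/
def NF (α : G → A ≃⋆ₐ[ℂ] A) (F : G → (A →ₗ[ℂ] A)) : G → G → (A →ₗ[ℂ] A) :=
  fun s t => (autLin (α s⁻¹)) ∘ₗ (F (s * t⁻¹)) ∘ₗ (autLin (α s))

end Dynamics

section Trace

variable {A : Type*} [NonUnitalCStarAlgebra A]

/-- `τ` is a positive linear functional. -/
def IsPositiveFunctional (τ : A →ₗ[ℂ] ℂ) : Prop :=
  ∀ a : A, 0 ≤ τ (star a * a)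

/-- `τ` is tracial. -/
def IsTracial (τ : A →ₗ[ℂ] ℂ) : Prop :=
  ∀ a b : A, τ (a * b) = τ (b * a)

/-- `τ` is faithful. -/
def IsFaithfulFunctional (τ : A →ₗ[ℂ] ℂ) : Prop :=
  ∀ a : A, τ (star a * a) = 0 → a = 0

/-- The `L²`-norm `‖a‖_{2,τ} = τ(a*a)^{1/2}` associated with a positive functional `τ`. -/
def l2norm (τ : A →ₗ[ℂ] ℂ) (a : A) : ℝ :=
  Real.sqrt (τ (star a * a)).re

/-- A map `Φ : A → A` is `L²`-bounded by `C` with respect to `τ`. -/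
def L2BoundedBy (τ : A →ₗ[ℂ] ℂ) (Φ : A →ₗ[ℂ] A) (C : ℝ) : Prop :=
  ∀ a : A, l2norm τ (Φ a) ≤ C * l2norm τ a

/-- A map `Φ : A → A` is `L²`-bounded with respect to `τ`, i.e. it extends to a bounded
operator `T_Φ` on `L²(A,τ)`. -/
def L2Bounded (τ : A →ₗ[ℂ] ℂ) (Φ : A →ₗ[ℂ] A) : Prop :=
  ∃ C : ℝ, 0 ≤ C ∧ L2BoundedBy τ Φ C

/-- The norm of the extension `T_Φ` of `Φ` to `L²(A,τ)`. -/
def l2OpNorm (τ : A →ₗ[ℂ] ℂ) (Φ : A →ₗ[ℂ] A) : ℝ :=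
  sInf { C : ℝ | 0 ≤ C ∧ L2BoundedBy τ Φ C }

/-- `Φ` is `L²`-compact with respect to `τ`: the image under `Φ` of the `L²`-unit ball of
`A` is totally bounded in the `L²`-norm; equivalently, the extension `T_Φ` of `Φ` to
`L²(A,τ)` is a compact operator. -/
def L2Compact (τ : A →ₗ[ℂ] ℂ) (Φ : A →ₗ[ℂ] A) : Prop :=
  ∀ ε : ℝ, 0 < ε → ∃ S : Finset A, ∀ a : A, l2norm τ a ≤ 1 →
    ∃ b ∈ S, l2norm τ (Φ a - b) < ε

end Trace

section Props

variable {A : Type*} [CStarAlgebra A]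

/-- The pair `(A,τ)` has the C*-algebra Haagerup property (Definition 3.1, Dong). -/
def CStarHaagerup (τ : A →ₗ[ℂ] ℂ) : Prop :=
  ∃ (I : Type) (_ : Nonempty I) (_ : SemilatticeSup I) (Φ : I → (A →ₗ[ℂ] A)),
    (∀ i, Φ i 1 = 1) ∧
    (∀ i, IsCompletelyPositive (Φ i)) ∧
    (∀ i (a : A), τ (Φ i (star a * a)) ≤ τ (star a * a)) ∧
    (∀ i, L2Compact τ (Φ i)) ∧
    (∀ a : A, Filter.Tendsto (fun i => l2norm τ (Φ i a - a)) Filter.atTop (nhds 0))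

/-- `A` is a nuclear C*-algebra: there is a net of finite-rank completely positive
contractions converging to the identity in the point-norm topology. -/
def NuclearCStarAlgebra (A : Type*) [NonUnitalCStarAlgebra A] : Prop :=
  ∃ (I : Type) (_ : Nonempty I) (_ : SemilatticeSup I) (Φ : I → (A →ₗ[ℂ] A)),
    (∀ i, IsCompletelyPositive (Φ i)) ∧
    (∀ i (a : A), ‖Φ i a‖ ≤ ‖a‖) ∧
    (∀ i, FiniteDimensional ℂ (LinearMap.range (Φ i))) ∧
    (∀ a : A, Filter.Tendsto (fun i => ‖Φ i a - a‖) Filter.atTop (nhds 0))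

/-- A discrete group `G` has the Haagerup property: there is a net of normalised
positive-definite functions on `G`, vanishing at infinity, converging pointwise to `1`. -/
def GroupHaagerup (G : Type*) [Group G] : Prop :=
  ∃ (I : Type) (_ : Nonempty I) (_ : SemilatticeSup I) (φ : I → G → ℂ),
    (∀ i, φ i 1 = 1) ∧
    (∀ i (n : ℕ) (s : Fin n → G) (μ : Fin n → ℂ),
      0 ≤ ∑ k, ∑ l, (starRingEnd ℂ) (μ k) * φ i ((s k)⁻¹ * s l) * μ l) ∧
    (∀ i, ∀ ε : ℝ, 0 < ε → ∃ S : Finset G, ∀ s ∉ S, ‖φ i s‖ ≤ ε) ∧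
    (∀ s : G, Filter.Tendsto (fun i => φ i s) Filter.atTop (nhds 1))

end Props

section More

variable {A : Type*} [NonUnitalCStarAlgebra A]

/-- A star homomorphism, as a `ℂ`-linear map. -/
def iotaLin {B : Type*} [NonUnitalCStarAlgebra B] (ι : A →⋆ₙₐ[ℂ] B) : A →ₗ[ℂ] B :=
  { toFun := ι
    map_add' := fun a b => map_add ι a b
    map_smul' := fun c a => map_smul ι c a }

/-- A function `φ : X × X → CB(A)` with values in the maps on `A` is of positive type. -/
def PositiveTypeA (φ : X → X → (A →ₗ[ℂ] A)) : Prop :=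
  ∀ (m : ℕ) (x : Fin m → X) (a : Matrix (Fin m) (Fin m) A),
    MatPos a → MatPos (Matrix.of fun p q => φ (x p) (x q) (a p q))

/-- The representation `π` of `A` on `ℓ²(G,H)`, as a linear map. -/
def piRepLin (ι : A →⋆ₙₐ[ℂ] (H →L[ℂ] H)) (α : G → A ≃⋆ₐ[ℂ] A) :
    A →ₗ[ℂ] (lp (fun _ : G => H) 2 →L[ℂ] lp (fun _ : G => H) 2) :=
  { toFun := piRep ι α
    map_add' := fun a b => by
      apply ContinuousLinearMap.ext; intro f
      apply lp.ext; funext s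
      have h1 : (((piRep ι α a + piRep ι α b) f :
          lp (fun _ : G => H) 2) : ∀ _ : G, H) s
          = ((piRep ι α a f : ∀ _ : G, H) s) + ((piRep ι α b f : ∀ _ : G, H) s) := by
        rw [ContinuousLinearMap.add_apply]
        exact congrFun (lp.coeFn_add (piRep ι α a f) (piRep ι α b f)) s
      show ι (α s⁻¹ (a + b)) (f s) = _
      rw [h1]
      show _ = ι (α s⁻¹ a) (f s) + ι (α s⁻¹ b) (f s)
      rw [map_add (α s⁻¹), map_add ι, ContinuousLinearMap.add_apply]
    map_smul' := fun c a => by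
      apply ContinuousLinearMap.ext; intro f
      apply lp.ext; funext s
      have h1 : (((c • piRep ι α a) f :
          lp (fun _ : G => H) 2) : ∀ _ : G, H) s
          = c • ((piRep ι α a f : ∀ _ : G, H) s) := by
        rw [ContinuousLinearMap.smul_apply]
        exact congrFun (lp.coeFn_smul c (piRep ι α a f)) s
      show ι (α s⁻¹ (c • a)) (f s) = _
      rw [RingHom.id_apply, h1]
      show _ = c • ι (α s⁻¹ a) (f s)
      rw [map_smul (α s⁻¹), map_smul ι, ContinuousLinearMap.smul_apply] }

/-- The completely bounded norm of a map defined on the reduced crossed product. -/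
def cbNormOnCrossed (ι : A →⋆ₙₐ[ℂ] (H →L[ℂ] H)) (α : G → A ≃⋆ₐ[ℂ] A)
    (Φ : (lp (fun _ : G => H) 2 →L[ℂ] lp (fun _ : G => H) 2) →ₗ[ℂ]
         (lp (fun _ : G => H) 2 →L[ℂ] lp (fun _ : G => H) 2)) : ℝ :=
  sInf { C : ℝ | 0 ≤ C ∧ CBBoundOnCrossed ι α Φ C }

/-- The `L²`-norm `‖x‖_{2,τ'}` on the reduced crossed product induced by the trace
`τ' = τ ∘ E`. -/
def l2normCr (τ : A →ₗ[ℂ] ℂ)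
    (E : (lp (fun _ : G => H) 2 →L[ℂ] lp (fun _ : G => H) 2) →ₗ[ℂ] A)
    (x : lp (fun _ : G => H) 2 →L[ℂ] lp (fun _ : G => H) 2) : ℝ :=
  Real.sqrt (τ (E (star x * x))).re

/-- The map `h_Φ : G → CB(A)` associated with a map `Φ` on the reduced crossed product:
`h_Φ(s)(a) = E(Φ(π(a)λ_s)λ_s*)`. -/
def hMap (ι : A →⋆ₙₐ[ℂ] (H →L[ℂ] H)) (α : G → A ≃⋆ₐ[ℂ] A)
    (E : (lp (fun _ : G => H) 2 →L[ℂ] lp (fun _ : G => H) 2) →ₗ[ℂ] A)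
    (Φ : (lp (fun _ : G => H) 2 →L[ℂ] lp (fun _ : G => H) 2) →ₗ[ℂ]
         (lp (fun _ : G => H) 2 →L[ℂ] lp (fun _ : G => H) 2))
    (s : G) : A →ₗ[ℂ] A :=
  E ∘ₗ (LinearMap.mulRight ℂ (star (lam s))) ∘ₗ Φ ∘ₗ
    (LinearMap.mulRight ℂ (lam (H := H) s)) ∘ₗ piRepLin ι α

end More

section BigProps

open Filter

variable {A : Type*} [CStarAlgebra A]

/-- The Haagerup property for the `C*`-dynamical system `(A,G,α,τ)` (Definition 3.3). -/
def DynHaagerup (ι : A →⋆ₙₐ[ℂ] (H →L[ℂ] H)) (α : G → A ≃⋆ₐ[ℂ] A)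
    (τ : A →ₗ[ℂ] ℂ) : Prop :=
  ∃ (I : Type) (_ : Nonempty I) (_ : SemilatticeSup I) (F : I → G → (A →ₗ[ℂ] A)),
    (∀ i, IsHerzSchurMultiplierCP ι α (F i)) ∧
    (∀ i, F i 1 1 = 1) ∧
    (∀ i (a : A), τ (F i 1 (star a * a)) ≤ τ (star a * a)) ∧
    (∀ i (t : G), L2Compact τ (F i t)) ∧
    (∀ i, ∀ ε : ℝ, 0 < ε → ∃ S : Finset G, ∀ s ∉ S, l2OpNorm τ (F i s) ≤ ε) ∧
    (∀ (t : G) (a : A),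
      Tendsto (fun i => l2norm τ (F i t a - a)) atTop (nhds 0))

/-- The C*-algebra Haagerup property for the reduced crossed product `A ⋊_{α,r} G`
endowed with the induced trace `τ' = τ ∘ E` (Definition 3.1). -/
def CrossedCStarHaagerup (ι : A →⋆ₙₐ[ℂ] (H →L[ℂ] H)) (α : G → A ≃⋆ₐ[ℂ] A)
    (τ : A →ₗ[ℂ] ℂ)
    (E : (lp (fun _ : G => H) 2 →L[ℂ] lp (fun _ : G => H) 2) →ₗ[ℂ] A) : Prop :=
  ∃ (I : Type) (_ : Nonempty I) (_ : SemilatticeSup I)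
    (Φ : I → ((lp (fun _ : G => H) 2 →L[ℂ] lp (fun _ : G => H) 2) →ₗ[ℂ]
              (lp (fun _ : G => H) 2 →L[ℂ] lp (fun _ : G => H) 2))),
    (∀ i, Φ i 1 = 1) ∧
    (∀ i, CPOnCrossed ι α (Φ i)) ∧
    (∀ i, ∀ x ∈ CrossedSet ι α, τ (E (Φ i (star x * x))) ≤ τ (E (star x * x))) ∧
    (∀ i, ∀ ε : ℝ, 0 < ε →
      ∃ S : Finset (lp (fun _ : G => H) 2 →L[ℂ] lp (fun _ : G => H) 2),
        ∀ x ∈ CrossedSet ι α, l2normCr τ E x ≤ 1 →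
          ∃ b ∈ S, l2normCr τ E (Φ i x - b) < ε) ∧
    (∀ x ∈ CrossedSet ι α,
      Tendsto (fun i => l2normCr τ E (Φ i x - x)) atTop (nhds 0))

end BigProps

section Nuc

open Filter

variable {A : Type*} [NonUnitalCStarAlgebra A]

/-- Nuclearity of the reduced crossed product `A ⋊_{α,r} G`: there is a net of
finite-rank completely positive contractions on it converging to the identity in the
point-norm topology. -/
def CrossedNuclear (ι : A →⋆ₙₐ[ℂ] (H →L[ℂ] H)) (α : G → A ≃⋆ₐ[ℂ] A) : Prop :=
  ∃ (I : Type) (_ : Nonempty I) (_ : SemilatticeSup I)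
    (Φ : I → ((lp (fun _ : G => H) 2 →L[ℂ] lp (fun _ : G => H) 2) →ₗ[ℂ]
              (lp (fun _ : G => H) 2 →L[ℂ] lp (fun _ : G => H) 2))),
    (∀ i, CPOnCrossed ι α (Φ i)) ∧
    (∀ i, ∀ x ∈ CrossedSet ι α, ‖Φ i x‖ ≤ ‖x‖) ∧
    (∀ i, FiniteDimensional ℂ
      (Submodule.span ℂ ((fun x => Φ i x) '' CrossedSet ι α))) ∧
    (∀ x ∈ CrossedSet ι α, Tendsto (fun i => ‖Φ i x - x‖) atTop (nhds 0))

/-- Nuclearity of the `C*`-dynamical system `(A,G,α)` (Definition 4.2): a net of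
completely positive, finitely supported Herz-Schur multipliers, with `‖F_i(e)‖_cb ≤ 1`,
with finite-rank values, converging to the identity pointwise in norm. -/
def DynNuclear (ι : A →⋆ₙₐ[ℂ] (H →L[ℂ] H)) (α : G → A ≃⋆ₐ[ℂ] A) : Prop :=
  ∃ (I : Type) (_ : Nonempty I) (_ : SemilatticeSup I) (F : I → G → (A →ₗ[ℂ] A)),
    (∀ i, IsHerzSchurMultiplierCP ι α (F i)) ∧
    (∀ i, (Function.support (F i)).Finite) ∧
    (∀ i, CBBound (fun a => ι a) (fun a => ι a) (F i 1) 1) ∧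
    (∀ i (s : G), FiniteDimensional ℂ (LinearMap.range (F i s))) ∧
    (∀ (s : G) (a : A), Tendsto (fun i => ‖F i s a - a‖) atTop (nhds 0))

end Nuc

section Amen

open Filter

variable {A : Type*} [CStarAlgebra A]

/-- Amenability of the action `α` of a discrete group `G` on a unital C*-algebra `A`
(Definition 4.5): a net of finitely supported functions `T_i : G → Z(A)⁺` with
`Σ_s T_i(s)² = 1` and `‖Σ_s (T_i(s) - α_t(T_i(t⁻¹s)))*(T_i(s) - α_t(T_i(t⁻¹s)))‖ → 0`. -/
def AmenableAction {G : Type*} [Group G] (α : G → A ≃⋆ₐ[ℂ] A) : Prop :=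
  ∃ (I : Type) (_ : Nonempty I) (_ : SemilatticeSup I) (T : I → G → A),
    (∀ i, (Function.support (T i)).Finite) ∧
    (∀ i (s : G) (c : A), Commute (T i s) c) ∧
    (∀ i (s : G), ∃ b : A, T i s = star b * b) ∧
    (∀ i, ∑ᶠ s : G, T i s * T i s = 1) ∧
    (∀ t : G, Tendsto (fun i =>
        ‖∑ᶠ s : G, star (T i s - α t (T i (t⁻¹ * s))) *
          (T i s - α t (T i (t⁻¹ * s)))‖) atTop (nhds 0))

end Amen

universe u v w

/-- Data for a Stinespring-type representation of an operator-valued function on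
`X × X`: a Hilbert space `K`, a *-representation `ρ : A → B(K)` and
families of operators `V, W : X → B(H,K)`. -/
structure OpValuedRep (A : Type u) [NonUnitalCStarAlgebra A]
    (H : Type v) [NormedAddCommGroup H] [InnerProductSpace ℂ H] [CompleteSpace H]
    (X : Type w) where
  /-- the Hilbert space of the representation -/
  K : Type (max u v w)
  [nacg : NormedAddCommGroup K]
  [ips : InnerProductSpace ℂ K]
  [cpl : CompleteSpace K]
  /-- the representation -/
  ρ : A →⋆ₙₐ[ℂ] (K →L[ℂ] K)
  /-- the left family of operators -/
  V : X → (H →L[ℂ] K)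
  /-- the right family of operators -/
  W : X → (H →L[ℂ] K)

attribute [instance] OpValuedRep.nacg OpValuedRep.ips OpValuedRep.cpl

end
noncomputable section
open scoped ComplexOrder ENNReal
open Matrix

section CN1

set_option linter.unusedSectionVars false

variable {H : Type*} [NormedAddCommGroup H] [InnerProductSpace ℂ H] [CompleteSpace H]

lemma cn_reflect {R : Type*} [CStarAlgebra R] [PartialOrder R] [StarOrderedRing R]
    (f : R →⋆ₙₐ[ℂ] (H →L[ℂ] H)) (hf : Function.Injective f)
    (m : R) (h : 0 ≤ f m) : ∃ n : R, m = star n * n := by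
  have hsa : IsSelfAdjoint m := by
    apply hf
    rw [map_star]
    exact (IsSelfAdjoint.of_nonneg h)
  have hd : m⁺ - m⁻ = m := CFC.posPart_sub_negPart m hsa
  have hp : ∀ x : R, 0 ≤ x → 0 ≤ f x := by
    intro x hx
    obtain ⟨y, hy⟩ := CStarAlgebra.nonneg_iff_eq_star_mul_self.1 hx
    rw [hy, map_mul, map_star]
    exact star_mul_self_nonneg _
  have hu := CFC.posPart_negPart_unique (a := f m) (b := f m⁺) (c := f m⁻)
    (by rw [← map_sub, hd]) (by rw [← map_mul, CFC.posPart_mul_negPart, map_zero])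
    (hp _ (CFC.posPart_nonneg m)) (hp _ (CFC.negPart_nonneg m))
  have h0 : (f m)⁻ = 0 := (CFC.negPart_eq_zero_iff (f m) (IsSelfAdjoint.of_nonneg h)).2 h
  have h1 : m⁻ = 0 := by
    apply hf
    rw [map_zero, ← h0]
    exact hu.2.symm
  have h2 : 0 ≤ m := by
    rw [h1, sub_zero] at hd
    rw [← hd]; exact CFC.posPart_nonneg m
  exact CStarAlgebra.nonneg_iff_eq_star_mul_self.1 h2

lemma cn_matOp_apply {ν : Type*} [Fintype ν] (M : Matrix ν ν (H →L[ℂ] H))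
    (ξ : PiLp 2 (fun _ : ν => H)) (i : ν) : matOp M ξ i = ∑ j, M i j (ξ j) := by
  simp [matOp]

lemma cn_matOp_inner {ν : Type*} [Fintype ν] (M : Matrix ν ν (H →L[ℂ] H))
    (ξ η : PiLp 2 (fun _ : ν => H)) :
    inner ℂ ξ (matOp M η) = ∑ i, ∑ j, inner ℂ (ξ i) (M i j (η j)) := by
  simp [PiLp.inner_apply, cn_matOp_apply, inner_sum]

variable {A : Type*} [CStarAlgebra A]

/-- matrices over `A` acting on `H^ν`. -/
def cnMatHom (ν : Type*) [Fintype ν] (ι : A →⋆ₙₐ[ℂ] (H →L[ℂ] H)) :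
    CStarMatrix ν ν A →⋆ₙₐ[ℂ]
      (PiLp 2 (fun _ : ν => H) →L[ℂ] PiLp 2 (fun _ : ν => H)) where
  toFun M := matOp (Matrix.map (CStarMatrix.ofMatrix.symm M) ι)
  map_smul' c M := by
    ext ξ i
    simp [cn_matOp_apply, Finset.smul_sum]
  map_zero' := by
    ext ξ i
    simp [cn_matOp_apply]
  map_add' M N := by
    ext ξ i
    simp [cn_matOp_apply, Finset.sum_add_distrib]
  map_mul' M N := by
    ext ξ i
    simp [cn_matOp_apply, CStarMatrix.mul_apply]
    rw [Finset.sum_comm]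
  map_star' M := by
    rw [ContinuousLinearMap.star_eq_adjoint, ContinuousLinearMap.eq_adjoint_iff]
    intro ξ η
    rw [cn_matOp_inner, ← inner_conj_symm, cn_matOp_inner]
    simp only [map_sum, inner_conj_symm]
    rw [Finset.sum_comm]
    refine Finset.sum_congr rfl fun i _ => Finset.sum_congr rfl fun j _ => ?_
    have : ∀ x : A, inner ℂ (ι (star x) (ξ.ofLp i)) (η.ofLp j) =
        inner ℂ (ξ.ofLp i) (ι x (η.ofLp j)) := by
      intro x
      rw [map_star, ContinuousLinearMap.star_eq_adjoint, ContinuousLinearMap.adjoint_inner_left]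
    simpa [CStarMatrix.star_apply] using this _

lemma cn_matPos_of_form {ν : Type*} [Fintype ν] (ι : A →⋆ₙₐ[ℂ] (H →L[ℂ] H))
    (hι : Function.Injective ι) (M : Matrix ν ν A)
    (h : ∀ ξ : ν → H, 0 ≤ ∑ i, ∑ j, inner ℂ (ξ i) (ι (M i j) (ξ j))) : MatPos M := by
  classical
  let _ : PartialOrder A := CStarAlgebra.spectralOrder A
  have _ : StarOrderedRing A := CStarAlgebra.spectralOrderedRing A
  have hinj : Function.Injective (cnMatHom ν ι) := by
    intro M N hMN
    ext i j
    apply hι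
    ext v
    have := congrArg (fun T => T (WithLp.toLp 2 (Pi.single j v)) i) hMN
    simpa [cnMatHom, cn_matOp_apply, Pi.single_apply, apply_ite] using this
  obtain ⟨N, hN⟩ := cn_reflect (cnMatHom ν ι) hinj (CStarMatrix.ofMatrix M) (by
    rw [ContinuousLinearMap.nonneg_iff_isPositive, ContinuousLinearMap.isPositive_iff_complex]
    intro ξ
    have h1 := h (fun i => ξ i)
    have h2 : inner ℂ ξ (cnMatHom ν ι (CStarMatrix.ofMatrix M) ξ) =
       ∑ i, ∑ j, inner ℂ (ξ i) (ι (M i j) (ξ j)) := cn_matOp_inner _ _ _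
    rw [← h2] at h1
    rw [← inner_conj_symm]
    generalize inner ℂ ξ (cnMatHom ν ι (CStarMatrix.ofMatrix M) ξ) = z at h1 ⊢
    rw [Complex.nonneg_iff] at h1
    refine ⟨?_, ?_⟩
    · apply Complex.ext <;> simp [← h1.2]
    · simpa using h1.1)
  refine ⟨CStarMatrix.ofMatrix.symm N, ?_⟩
  exact hN

lemma cn_form_of_matPos {ν : Type*} [Fintype ν] (ι : A →⋆ₙₐ[ℂ] (H →L[ℂ] H))
    (M : Matrix ν ν A) (hM : MatPos M) (ξ : ν → H) :
    0 ≤ ∑ i, ∑ j, inner ℂ (ξ i) (ι (M i j) (ξ j)) := by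
  obtain ⟨N, rfl⟩ := hM
  have : ∑ i, ∑ j, inner ℂ (ξ i) (ι ((Nᴴ * N) i j) (ξ j)) =
      ∑ k, inner ℂ (∑ i, ι (N k i) (ξ i)) (∑ i, ι (N k i) (ξ i)) := by
    simp only [Matrix.mul_apply, map_sum, sum_inner, inner_sum, Matrix.conjTranspose_apply,
      map_mul, map_star, ContinuousLinearMap.star_eq_adjoint, _root_.sum_apply,
      mul_apply_eq_comp, ContinuousLinearMap.adjoint_inner_right]
    rw [Finset.sum_congr rfl fun i _ => Finset.sum_comm, Finset.sum_comm]
    exact Finset.sum_congr rfl fun k _ => Finset.sum_comm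
  rw [this]
  refine Finset.sum_nonneg fun k _ => ?_
  rw [inner_self_eq_norm_sq_to_K]
  norm_cast
  positivity

end CN1
end

noncomputable section
open scoped ComplexOrder ENNReal
open Matrix

section CN2

set_option linter.unusedSectionVars false

variable {H : Type*} [NormedAddCommGroup H] [InnerProductSpace ℂ H] [CompleteSpace H]
variable {A : Type*} [CStarAlgebra A] {G : Type*} [Group G]

lemma cn_lam_apply (t s : G) (f : lp (fun _ : G => H) 2) : lam t f s = f (t⁻¹ * s) := rfl

lemma cn_pi_apply (ι : A →⋆ₙₐ[ℂ] (H →L[ℂ] H)) (α : G → A ≃⋆ₐ[ℂ] A) (a : A)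
    (f : lp (fun _ : G => H) 2) (s : G) : piRep ι α a f s = ι (α s⁻¹ a) (f s) := rfl

lemma cn_eval_apply {X : Type*} (x : X) (f : lp (fun _ : X => H) 2) : lpEval x f = f x := rfl

lemma cn_single_inner {X : Type*} (x : X) (ξ : H) (f : lp (fun _ : X => H) 2) :
    inner ℂ (lpSingle x ξ) f = inner ℂ ξ (lpEval x f) := by
  classical
  rw [cn_eval_apply]
  exact lp.inner_single_left (𝕜 := ℂ) x ξ f

open Classical in
lemma cn_single_apply {X : Type*} (x y : X) (ξ : H) :
    (lpSingle x ξ : lp (fun _ : X => H) 2) y = if y = x then ξ else 0 := by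
  by_cases h : y = x
  · subst h
    simp only [if_true]
    exact lp.single_apply_self (E := fun _ : X => H) 2 y ξ
  · rw [if_neg h]
    exact lp.single_apply_ne (E := fun _ : X => H) 2 x ξ h

lemma cn_lam_norm (t : G) :
    ‖(lam t : lp (fun _ : G => H) 2 →L[ℂ] lp (fun _ : G => H) 2)‖ ≤ 1 :=
  LinearMap.mkContinuous_norm_le _ zero_le_one _

lemma cn_lam_mul (s t : G) : (lam (H := H) s) * lam t = lam (s * t) := by
  ext f g
  show f (t⁻¹ * (s⁻¹ * g)) = f ((s * t)⁻¹ * g)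
  group

lemma cn_lam_one : lam (H := H) (1 : G) = 1 := by
  ext f g
  show f (1⁻¹ * g) = f g
  simp

lemma cn_lam_star (t : G) : star (lam (H := H) t) = lam t⁻¹ := by
  symm
  rw [ContinuousLinearMap.star_eq_adjoint, ContinuousLinearMap.eq_adjoint_iff]
  intro f g
  rw [lp.inner_eq_tsum, lp.inner_eq_tsum,
    ← (Equiv.mulLeft t).tsum_eq (fun i => inner ℂ (f i) (lam t g i))]
  simp [cn_lam_apply]

/-- `piRep` as a star homomorphism. -/
def cnPi (ι : A →⋆ₙₐ[ℂ] (H →L[ℂ] H)) (α : G → A ≃⋆ₐ[ℂ] A) :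
    A →⋆ₙₐ[ℂ] (lp (fun _ : G => H) 2 →L[ℂ] lp (fun _ : G => H) 2) where
  toFun := piRep ι α
  map_smul' := (piRepLin ι α).map_smul
  map_zero' := (piRepLin ι α).map_zero
  map_add' := (piRepLin ι α).map_add
  map_mul' a b := by
    ext f g
    show ι (α g⁻¹ (a * b)) (f g) = ι (α g⁻¹ a) (ι (α g⁻¹ b) (f g))
    simp
  map_star' a := by
    rw [ContinuousLinearMap.star_eq_adjoint, ContinuousLinearMap.eq_adjoint_iff]
    intro f g
    rw [lp.inner_eq_tsum, lp.inner_eq_tsum]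
    refine tsum_congr fun s => ?_
    rw [cn_pi_apply, cn_pi_apply, map_star, map_star, ContinuousLinearMap.star_eq_adjoint,
      ContinuousLinearMap.adjoint_inner_left]

lemma cn_pi_eq (ι : A →⋆ₙₐ[ℂ] (H →L[ℂ] H)) (α : G → A ≃⋆ₐ[ℂ] A) (a : A) :
    piRep ι α a = cnPi ι α a := rfl

lemma cn_pi_one (ι : A →⋆ₙₐ[ℂ] (H →L[ℂ] H)) (hι1 : ι 1 = 1) (α : G → A ≃⋆ₐ[ℂ] A) :
    cnPi ι α 1 = 1 := by
  ext f g
  show ι (α g⁻¹ 1) (f g) = f g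
  rw [map_one, hι1]; rfl

lemma cn_cov (ι : A →⋆ₙₐ[ℂ] (H →L[ℂ] H)) (α : G → A ≃⋆ₐ[ℂ] A) (hα : IsAction α)
    (t : G) (a : A) : lam t * cnPi ι α a = cnPi ι α (α t a) * lam t := by
  ext f g
  show ι (α (t⁻¹ * g)⁻¹ a) (f (t⁻¹ * g)) = ι (α g⁻¹ (α t a)) (f (t⁻¹ * g))
  rw [← hα.2]
  simp

/-- matrix entries -/
def cnEntry (p q : G) :
    (lp (fun _ : G => H) 2 →L[ℂ] lp (fun _ : G => H) 2) →ₗ[ℂ] (H →L[ℂ] H) where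
  toFun x := lpEval p ∘L x ∘L lpSingle q
  map_add' x y := by ext; simp
  map_smul' c x := by ext; simp

lemma cn_entry_apply (p q : G) (x : lp (fun _ : G => H) 2 →L[ℂ] lp (fun _ : G => H) 2) :
    cnEntry p q x = lpEval p ∘L x ∘L lpSingle q := rfl

lemma cn_entry_cont (p q : G) : Continuous (cnEntry (H := H) p q) := by
  show Continuous fun x : lp (fun _ : G => H) 2 →L[ℂ] lp (fun _ : G => H) 2 =>
    lpEval p ∘L x ∘L lpSingle q
  fun_prop

lemma cn_entry_inner (p q : G) (x : lp (fun _ : G => H) 2 →L[ℂ] lp (fun _ : G => H) 2)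
    (ξ η : H) : inner ℂ ξ (cnEntry p q x η) = inner ℂ (lpSingle p ξ) (x (lpSingle q η)) := by
  rw [cn_single_inner]; rfl

open Classical in
lemma cn_entry_gen (ι : A →⋆ₙₐ[ℂ] (H →L[ℂ] H)) (α : G → A ≃⋆ₐ[ℂ] A) (a : A) (t p q : G) :
    cnEntry p q (piRep ι α a * lam t) = ι (if p = t * q then α p⁻¹ a else 0) := by
  ext ξ
  show ι (α p⁻¹ a) ((lpSingle q ξ : lp (fun _ : G => H) 2) (t⁻¹ * p)) = _
  rw [cn_single_apply]
  by_cases h : p = t * q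
  · simp [h]
  · have : ¬ (t⁻¹ * p = q) := fun h' => h (by rw [← h']; group)
    simp [h, this]

/-- the crossed product as a submodule -/
def cnS (ι : A →⋆ₙₐ[ℂ] (H →L[ℂ] H)) (α : G → A ≃⋆ₐ[ℂ] A) :
    Submodule ℂ (lp (fun _ : G => H) 2 →L[ℂ] lp (fun _ : G => H) 2) :=
  (Submodule.span ℂ {x | ∃ (a : A) (t : G), x = piRep ι α a * lam t}).topologicalClosure

lemma cn_mem_iff (ι : A →⋆ₙₐ[ℂ] (H →L[ℂ] H)) (α : G → A ≃⋆ₐ[ℂ] A)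
    (x : lp (fun _ : G => H) 2 →L[ℂ] lp (fun _ : G => H) 2) :
    x ∈ CrossedSet ι α ↔ x ∈ cnS ι α := Iff.rfl

lemma cn_gen_mem (ι : A →⋆ₙₐ[ℂ] (H →L[ℂ] H)) (α : G → A ≃⋆ₐ[ℂ] A) (a : A) (t : G) :
    cnPi ι α a * lam t ∈ cnS ι α :=
  Submodule.le_topologicalClosure _ (Submodule.subset_span ⟨a, t, rfl⟩)

lemma cn_one_mem (ι : A →⋆ₙₐ[ℂ] (H →L[ℂ] H)) (hι1 : ι 1 = 1) (α : G → A ≃⋆ₐ[ℂ] A) :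
    1 ∈ cnS ι α := by
  simpa [cn_pi_one ι hι1, cn_lam_one] using cn_gen_mem ι α 1 1

lemma cn_pi_mem (ι : A →⋆ₙₐ[ℂ] (H →L[ℂ] H)) (α : G → A ≃⋆ₐ[ℂ] A) (a : A) :
    cnPi ι α a ∈ cnS ι α := by
  simpa [cn_lam_one] using cn_gen_mem ι α a 1

lemma cn_entry_mem (ι : A →⋆ₙₐ[ℂ] (H →L[ℂ] H)) (hisom : ∀ a : A, ‖ι a‖ = ‖a‖)
    (α : G → A ≃⋆ₐ[ℂ] A) (p q : G)
    (x : lp (fun _ : G => H) 2 →L[ℂ] lp (fun _ : G => H) 2) (hx : x ∈ cnS ι α) :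
    ∃ a, ι a = cnEntry p q x := by
  classical
  have hcl : IsClosed (Set.range ι) :=
    (AddMonoidHomClass.isometry_of_norm ι hisom).isClosedEmbedding.isClosed_range
  have key : cnS ι α ≤ (LinearMap.range (iotaLin ι)).comap (cnEntry p q) := by
    refine Submodule.topologicalClosure_minimal _ ?_ ?_
    · refine Submodule.span_le.2 ?_
      rintro _ ⟨a, t, rfl⟩
      exact ⟨_, (cn_entry_gen ι α a t p q).symm⟩
    · exact hcl.preimage (cn_entry_cont p q)
  obtain ⟨a, ha⟩ := key hx
  exact ⟨a, ha⟩

lemma cn_star_mem (ι : A →⋆ₙₐ[ℂ] (H →L[ℂ] H)) 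
    (α : G → A ≃⋆ₐ[ℂ] A) (hα : IsAction α)
    (x : lp (fun _ : G => H) 2 →L[ℂ] lp (fun _ : G => H) 2) (hx : x ∈ cnS ι α) :
    star x ∈ cnS ι α := by
  have h0 : ∀ y ∈ Submodule.span ℂ {x | ∃ (a : A) (t : G), x = piRep ι α a * lam t},
      star y ∈ cnS ι α := by
    intro y hy
    induction hy using Submodule.span_induction with
    | mem y hy =>
      obtain ⟨a, t, rfl⟩ := hy
      rw [cn_pi_eq, star_mul, cn_lam_star, ← map_star, cn_cov ι α hα]
      exact cn_gen_mem _ _ _ _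
    | zero => simp
    | add y z _ _ h1 h2 => rw [star_add]; exact Submodule.add_mem _ h1 h2
    | smul c y _ h1 => rw [star_smul]; exact Submodule.smul_mem _ _ h1
  have hcl : IsClosed (cnS ι α : Set (lp (fun _ : G => H) 2 →L[ℂ] lp (fun _ : G => H) 2)) :=
    Submodule.isClosed_topologicalClosure _
  have h1 : IsClosed {y : lp (fun _ : G => H) 2 →L[ℂ] lp (fun _ : G => H) 2 |
      star y ∈ cnS ι α} := hcl.preimage continuous_star
  exact closure_minimal h0 h1 hx

lemma cn_exists_left (ι : A →⋆ₙₐ[ℂ] (H →L[ℂ] H)) (hι : Function.Injective ι) :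
    ∃ L : (H →L[ℂ] H) →ₗ[ℂ] A, ∀ a, L (ι a) = a := by
  obtain ⟨L, hL⟩ := LinearMap.exists_leftInverse_of_injective (iotaLin ι)
    (LinearMap.ker_eq_bot.2 hι)
  exact ⟨L, fun a => LinearMap.congr_fun hL a⟩

end CN2
end

noncomputable section
open scoped ComplexOrder ENNReal
open Matrix

section CN3

set_option linter.unusedSectionVars false

variable {H : Type*} [NormedAddCommGroup H] [InnerProductSpace ℂ H] [CompleteSpace H]
variable {A : Type*} [CStarAlgebra A] {G : Type*} [Group G]

lemma cn_op_matPos_of_form {ν : Type*} [Fintype ν] (M : Matrix ν ν (H →L[ℂ] H))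
    (h : ∀ ξ : ν → H, 0 ≤ ∑ i, ∑ j, inner ℂ (ξ i) (M i j (ξ j))) : MatPos M :=
  cn_matPos_of_form (NonUnitalStarAlgHom.id ℂ (H →L[ℂ] H)) (fun _ _ h => h) M h

lemma cn_op_form_of_matPos {ν : Type*} [Fintype ν] (M : Matrix ν ν (H →L[ℂ] H))
    (hM : MatPos M) (ξ : ν → H) : 0 ≤ ∑ i, ∑ j, inner ℂ (ξ i) (M i j (ξ j)) :=
  cn_form_of_matPos (NonUnitalStarAlgHom.id ℂ (H →L[ℂ] H)) M hM ξ

lemma cn_matPos_reindex {R : Type*} [NonUnitalSemiring R] [StarRing R] {ν μ : Type*}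
    [Fintype ν] [Fintype μ] (e : μ ≃ ν) (M : Matrix ν ν R) (hM : MatPos M) :
    MatPos (M.submatrix e e) := by
  obtain ⟨N, rfl⟩ := hM
  refine ⟨N.submatrix e e, ?_⟩
  rw [Matrix.conjTranspose_submatrix, Matrix.submatrix_mul_equiv]

lemma cn_cp_fintype (Φ : A →ₗ[ℂ] A) (hΦ : IsCompletelyPositive Φ) {ν : Type*} [Fintype ν]
    (M : Matrix ν ν A) (hM : MatPos M) : MatPos (M.map Φ) := by
  have e := Fintype.equivFin ν
  have h1 := hΦ _ _ (cn_matPos_reindex e.symm M hM)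
  have h2 := cn_matPos_reindex e _ h1
  convert h2 using 1
  ext i j
  simp

/-- entries of an operator of the crossed product, along any row of vectors. -/
lemma cn_compress {ν κ : Type*} [Fintype ν] [Fintype κ]
    (ι : A →⋆ₙₐ[ℂ] (H →L[ℂ] H)) (hisom : ∀ a : A, ‖ι a‖ = ‖a‖)
    (α : G → A ≃⋆ₐ[ℂ] A)
    (L : (H →L[ℂ] H) →ₗ[ℂ] A) (hL : ∀ a, L (ι a) = a) (g : κ → G)
    (M : Matrix ν ν (lp (fun _ : G => H) 2 →L[ℂ] lp (fun _ : G => H) 2))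
    (hM : ∀ i j, M i j ∈ cnS ι α) (hpos : MatPos M) :
    MatPos (Matrix.of fun (x y : ν × κ) => L (cnEntry (g x.2) (g y.2) (M x.1 y.1))) := by
  have hinj : Function.Injective ι := (AddMonoidHomClass.isometry_of_norm ι hisom).injective
  refine cn_matPos_of_form ι hinj _ fun ξ => ?_
  have h1 := cn_op_form_of_matPos M hpos (fun i => ∑ k, lpSingle (g k) (ξ (i, k)))
  refine h1.trans_eq ?_
  have h2 : ∀ i j p q, ι (L (cnEntry p q (M i j))) = cnEntry p q (M i j) := by
    intro i j p q
    obtain ⟨a, ha⟩ := cn_entry_mem ι hisom α p q _ (hM i j)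
    rw [← ha, hL]
  simp only [Matrix.of_apply, h2, cn_entry_inner, Fintype.sum_prod_type, map_sum, sum_inner,
    inner_sum]
  refine Finset.sum_congr rfl fun i _ => ?_
  rw [Finset.sum_comm]
  rw [Finset.sum_comm]
  rw [Finset.sum_congr rfl fun j _ => Finset.sum_comm]
  rw [Finset.sum_comm]

/-- The approximating map. -/
def cnTheta (ι : A →⋆ₙₐ[ℂ] (H →L[ℂ] H)) (α : G → A ≃⋆ₐ[ℂ] A)
    (L : (H →L[ℂ] H) →ₗ[ℂ] A) (F : Finset G) (T : G → A) (Φ : A →ₗ[ℂ] A) :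
    (lp (fun _ : G => H) 2 →L[ℂ] lp (fun _ : G => H) 2) →ₗ[ℂ]
      (lp (fun _ : G => H) 2 →L[ℂ] lp (fun _ : G => H) 2) :=
  ∑ p ∈ F, ∑ q ∈ F,
    LinearMap.mulLeft ℂ (cnPi ι α (T p) * lam p) ∘ₗ
    LinearMap.mulRight ℂ (star (cnPi ι α (T q) * lam q)) ∘ₗ
    piRepLin ι α ∘ₗ Φ ∘ₗ L ∘ₗ cnEntry p q

lemma cn_theta_apply (ι : A →⋆ₙₐ[ℂ] (H →L[ℂ] H)) (α : G → A ≃⋆ₐ[ℂ] A)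
    (L : (H →L[ℂ] H) →ₗ[ℂ] A) (F : Finset G) (T : G → A) (Φ : A →ₗ[ℂ] A)
    (x : lp (fun _ : G => H) 2 →L[ℂ] lp (fun _ : G => H) 2) :
    cnTheta ι α L F T Φ x = ∑ p ∈ F, ∑ q ∈ F,
      (cnPi ι α (T p) * lam p) * (cnPi ι α (Φ (L (cnEntry p q x))) *
        star (cnPi ι α (T q) * lam q)) := by
  simp only [cnTheta, LinearMap.sum_apply, LinearMap.comp_apply, LinearMap.mulLeft_apply,
    LinearMap.mulRight_apply]
  rfl

lemma cn_sandwich (ι : A →⋆ₙₐ[ℂ] (H →L[ℂ] H)) (α : G → A ≃⋆ₐ[ℂ] A) (hα : IsAction α)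
    (a b c : A) (p q : G) :
    (cnPi ι α a * lam p) * (cnPi ι α b * star (cnPi ι α c * lam q)) =
      cnPi ι α (a * α p b * α (p * q⁻¹) (star c)) * lam (p * q⁻¹) := by
  rw [star_mul, cn_lam_star, ← map_star, map_mul, map_mul]
  calc cnPi ι α a * lam p * (cnPi ι α b * (lam q⁻¹ * cnPi ι α (star c)))
      = cnPi ι α a * (lam p * cnPi ι α b) * lam q⁻¹ * cnPi ι α (star c) := by
        simp only [mul_assoc]
    _ = cnPi ι α a * cnPi ι α (α p b) * ((lam p * lam q⁻¹) * cnPi ι α (star c)) := by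
        rw [cn_cov ι α hα]; simp only [mul_assoc]
    _ = _ := by
        rw [cn_lam_mul, cn_cov ι α hα]; simp only [mul_assoc]

lemma cn_theta_mem (ι : A →⋆ₙₐ[ℂ] (H →L[ℂ] H)) (α : G → A ≃⋆ₐ[ℂ] A) (hα : IsAction α)
    (L : (H →L[ℂ] H) →ₗ[ℂ] A) (F : Finset G) (T : G → A) (Φ : A →ₗ[ℂ] A)
    (x : lp (fun _ : G => H) 2 →L[ℂ] lp (fun _ : G => H) 2) :
    cnTheta ι α L F T Φ x ∈ cnS ι α := by
  rw [cn_theta_apply]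
  refine Submodule.sum_mem _ fun p _ => Submodule.sum_mem _ fun q _ => ?_
  rw [cn_sandwich ι α hα]
  exact cn_gen_mem _ _ _ _

lemma cn_fin_aux {E B X : Type*} [AddCommGroup E] [Module ℂ E] [AddCommGroup B] [Module ℂ B]
    (F : Finset X) (g : X → X → (B →ₗ[ℂ] E)) (U : Submodule ℂ B) [FiniteDimensional ℂ U]
    (W : Set E) (hW : ∀ w ∈ W, ∃ u : X → X → B, (∀ p q, u p q ∈ U) ∧
      w = ∑ p ∈ F, ∑ q ∈ F, g p q (u p q)) :
    FiniteDimensional ℂ (Submodule.span ℂ W) := by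
  let V := (F ×ˢ F).sup fun r => U.map (g r.1 r.2)
  have hV : FiniteDimensional ℂ V := Submodule.finiteDimensional_finset_sup _ _
  have hle : Submodule.span ℂ W ≤ V := by
    refine Submodule.span_le.2 fun w hw => ?_
    obtain ⟨u, hu, rfl⟩ := hW w hw
    refine Submodule.sum_mem _ fun p hp => Submodule.sum_mem _ fun q hq => ?_
    have : U.map (g p q) ≤ V :=
      Finset.le_sup (f := fun r : X × X => U.map (g r.1 r.2))
        (Finset.mk_mem_product hp hq)
    exact this ⟨_, hu p q, rfl⟩
  exact Submodule.finiteDimensional_of_le hle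

lemma cn_theta_finite (ι : A →⋆ₙₐ[ℂ] (H →L[ℂ] H)) (α : G → A ≃⋆ₐ[ℂ] A)
    (L : (H →L[ℂ] H) →ₗ[ℂ] A) (F : Finset G) (T : G → A) (Φ : A →ₗ[ℂ] A)
    (hΦ : FiniteDimensional ℂ (LinearMap.range Φ)) 
    (S : Set (lp (fun _ : G => H) 2 →L[ℂ] lp (fun _ : G => H) 2)) :
    FiniteDimensional ℂ (Submodule.span ℂ ((fun x => cnTheta ι α L F T Φ x) '' S)) := by
  refine cn_fin_aux F (fun p q => LinearMap.mulLeft ℂ (cnPi ι α (T p) * lam p) ∘ₗ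
    LinearMap.mulRight ℂ (star (cnPi ι α (T q) * lam q)) ∘ₗ piRepLin ι α)
    (LinearMap.range Φ) _ ?_
  rintro _ ⟨x, -, rfl⟩
  exact ⟨fun p q => Φ (L (cnEntry p q x)), fun p q => ⟨_, rfl⟩, cn_theta_apply ι α L F T Φ x⟩

lemma cn_theta_cp (ι : A →⋆ₙₐ[ℂ] (H →L[ℂ] H)) (hisom : ∀ a : A, ‖ι a‖ = ‖a‖)
    (α : G → A ≃⋆ₐ[ℂ] A) (hα : IsAction α)
    (L : (H →L[ℂ] H) →ₗ[ℂ] A) (hL : ∀ a, L (ι a) = a)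
    (F : Finset G) (T : G → A) (Φ : A →ₗ[ℂ] A) (hΦ : IsCompletelyPositive Φ) :
    CPOnCrossed ι α (cnTheta ι α L F T Φ) := by
  refine ⟨fun x _ => cn_theta_mem ι α hα L F T Φ x, ?_⟩
  intro n M hM hpos
  have h1 := cn_compress ι hisom α L hL (fun k : F => (k : G)) M hM hpos
  have h2 := cn_cp_fintype Φ hΦ _ h1
  refine cn_op_matPos_of_form _ fun ξ => ?_
  have h3 := cn_form_of_matPos (cnPi ι α) _ h2
    (fun x => (star (cnPi ι α (T x.2) * lam (x.2 : G)) :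
      lp (fun _ : G => H) 2 →L[ℂ] lp (fun _ : G => H) 2) (ξ x.1))
  refine h3.trans_eq ?_
  simp only [Matrix.map_apply, Matrix.of_apply, cn_theta_apply, Fintype.sum_prod_type,
    _root_.sum_apply, inner_sum, mul_apply_eq_comp]
  refine Finset.sum_congr rfl fun i _ => ?_
  rw [Finset.sum_comm]
  refine Finset.sum_congr rfl fun j _ => ?_
  rw [← Finset.sum_coe_sort F]
  refine Finset.sum_congr rfl fun p _ => ?_
  rw [← Finset.sum_coe_sort F]
  refine Finset.sum_congr rfl fun q _ => ?_
  rw [ContinuousLinearMap.star_eq_adjoint, ContinuousLinearMap.star_eq_adjoint,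
    ContinuousLinearMap.adjoint_inner_left]
  rfl

end CN3
end

noncomputable section
open scoped ComplexOrder ENNReal
open Matrix

section CN4

set_option linter.unusedSectionVars false

variable {H : Type*} [NormedAddCommGroup H] [InnerProductSpace ℂ H] [CompleteSpace H]
variable {A : Type*} [CStarAlgebra A] {G : Type*} [Group G]

lemma cn_block_pos (x : H →L[ℂ] H) :
    MatPos !![((‖x‖ : ℂ) • (1 : H →L[ℂ] H)), x; star x, ((‖x‖ : ℂ) • (1 : H →L[ℂ] H))] := by
  refine cn_op_matPos_of_form _ fun ξ => ?_
  have h1 : inner ℂ (ξ 1) (star x (ξ 0)) = starRingEnd ℂ (inner ℂ (ξ 0) (x (ξ 1))) := by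
    rw [inner_conj_symm, ContinuousLinearMap.star_eq_adjoint,
      ContinuousLinearMap.adjoint_inner_right]
  have h2 : ‖inner ℂ (ξ 0) (x (ξ 1))‖ ≤ ‖ξ 0‖ * (‖x‖ * ‖ξ 1‖) :=
    (norm_inner_le_norm _ _).trans (by gcongr; exact x.le_opNorm _)
  have h3 := (Complex.abs_re_le_norm _).trans h2
  have h4 : ∀ v : H, inner ℂ v v = ((‖v‖ ^ 2 : ℝ) : ℂ) := by
    intro v; rw [inner_self_eq_norm_sq_to_K]; norm_cast
  simp only [Fin.sum_univ_two, Matrix.of_apply, Matrix.cons_val_zero, Matrix.cons_val_one,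
    Matrix.cons_val', Matrix.cons_val_fin_one, _root_.smul_apply,
    one_apply_eq_self, inner_smul_right, h1, h4]
  generalize inner ℂ (ξ 0) (x (ξ 1)) = z at *
  rw [Complex.nonneg_iff]
  constructor
  · simp [-Complex.ofReal_pow]
    have := abs_le.1 h3
    nlinarith [norm_nonneg x, mul_nonneg (norm_nonneg x) (sq_nonneg (‖ξ 0‖ - ‖ξ 1‖))]
  · simp [-Complex.ofReal_pow]

lemma cn_norm_le_of_block (r : ℝ) (hr : 0 ≤ r) (u y z : H →L[ℂ] H)
    (hu : ∀ ξ, (inner ℂ ξ (u ξ)).re ≤ ‖ξ‖ ^ 2)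
    (h : MatPos !![((r : ℂ) • u), y; z, ((r : ℂ) • u)]) : ‖y‖ ≤ r := by
  have hz : z = star y := by
    obtain ⟨N, hN⟩ := h
    have h1 : (!![((r : ℂ) • u), y; z, ((r : ℂ) • u)])ᴴ = !![((r : ℂ) • u), y; z, ((r : ℂ) • u)] := by
      rw [hN, Matrix.conjTranspose_mul, Matrix.conjTranspose_conjTranspose]
    have := congrFun (congrFun h1 1) 0
    simpa [Matrix.conjTranspose_apply] using this.symm
  have key : ∀ ξ η : H, -(2 * (inner ℂ ξ (y η)).re) ≤ r * (‖ξ‖ ^ 2 + ‖η‖ ^ 2) := by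
    intro ξ η
    have h0 := cn_op_form_of_matPos _ h ![ξ, η]
    have h1 : inner ℂ η (z ξ) = starRingEnd ℂ (inner ℂ ξ (y η)) := by
      rw [inner_conj_symm, hz, ContinuousLinearMap.star_eq_adjoint,
        ContinuousLinearMap.adjoint_inner_right]
    simp only [Fin.sum_univ_two, Matrix.of_apply, Matrix.cons_val_zero, Matrix.cons_val_one,
      Matrix.cons_val', Matrix.cons_val_fin_one, _root_.smul_apply,
      inner_smul_right, h1] at h0
    have h2 := (Complex.nonneg_iff.1 h0).1
    simp only [Complex.add_re, Complex.re_ofReal_mul, Complex.conj_re] at h2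
    nlinarith [hu ξ, hu η, mul_le_mul_of_nonneg_left (hu ξ) hr, mul_le_mul_of_nonneg_left (hu η) hr]
  refine ContinuousLinearMap.opNorm_le_bound _ hr fun η => ?_
  by_cases hy : ‖y η‖ = 0
  · rw [hy]; positivity
  have hη : 0 < ‖η‖ := by
    rw [norm_pos_iff]; rintro rfl; simp at hy
  have hy' : 0 < ‖y η‖ := lt_of_le_of_ne (norm_nonneg _) (Ne.symm hy)
  have h3 := key (((-(‖η‖ / ‖y η‖) : ℝ) : ℂ) • y η) η
  have h4 : (inner ℂ (((-(‖η‖ / ‖y η‖) : ℝ) : ℂ) • y η) (y η)).re = -(‖η‖ * ‖y η‖) := by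
    rw [inner_smul_left, Complex.conj_ofReal, Complex.re_ofReal_mul]
    have : (inner ℂ (y η) (y η)).re = ‖y η‖ ^ 2 := by
      rw [inner_self_eq_norm_sq_to_K]; norm_cast
    rw [this]; field_simp
  have h5 : ‖(((-(‖η‖ / ‖y η‖) : ℝ) : ℂ) • y η)‖ = ‖η‖ := by
    rw [norm_smul, Complex.norm_real, norm_neg, Real.norm_of_nonneg (by positivity)]
    field_simp
  rw [h4, h5] at h3
  have h6 : ‖η‖ * ‖y η‖ ≤ ‖η‖ * (r * ‖η‖) := by nlinarith
  exact le_of_mul_le_mul_left h6 hη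

lemma cn_contract (ι : A →⋆ₙₐ[ℂ] (H →L[ℂ] H)) (hι1 : ι 1 = 1)
    (α : G → A ≃⋆ₐ[ℂ] A) (hα : IsAction α)
    (Θ : (lp (fun _ : G => H) 2 →L[ℂ] lp (fun _ : G => H) 2) →ₗ[ℂ]
      (lp (fun _ : G => H) 2 →L[ℂ] lp (fun _ : G => H) 2))
    (hΘ : CPOnCrossed ι α Θ)
    (h1 : ∀ ξ, (inner ℂ ξ (Θ 1 ξ)).re ≤ ‖ξ‖ ^ 2)
    (x : lp (fun _ : G => H) 2 →L[ℂ] lp (fun _ : G => H) 2) (hx : x ∈ CrossedSet ι α) :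
    ‖Θ x‖ ≤ ‖x‖ := by
  have h2 := hΘ.2 2 _ (by
    have a1 := cn_one_mem ι hι1 α
    have a2 := cn_star_mem ι α hα x hx
    intro i j
    fin_cases i <;> fin_cases j
    · exact Submodule.smul_mem (cnS ι α) _ a1
    · exact hx
    · exact a2
    · exact Submodule.smul_mem (cnS ι α) _ a1) (cn_block_pos x)
  refine cn_norm_le_of_block ‖x‖ (norm_nonneg _) (Θ 1) (Θ x) (Θ (star x)) h1 ?_
  convert h2 using 1
  ext1 i j
  fin_cases i <;> fin_cases j <;> first | rfl | exact (map_smul Θ _ _).symm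

lemma cn_theta_one (ι : A →⋆ₙₐ[ℂ] (H →L[ℂ] H)) (hι1 : ι 1 = 1)
    (α : G → A ≃⋆ₐ[ℂ] A)
    (L : (H →L[ℂ] H) →ₗ[ℂ] A) (hL : ∀ a, L (ι a) = a)
    (F : Finset G) (T : G → A) (Φ : A →ₗ[ℂ] A) :
    cnTheta ι α L F T Φ 1 = ∑ p ∈ F, 
      (cnPi ι α (T p) * lam p) * (cnPi ι α (Φ 1) * star (cnPi ι α (T p) * lam p)) := by
  classical
  rw [cn_theta_apply]
  refine Finset.sum_congr rfl fun p hp => ?_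
  have h1 : ∀ q, L (cnEntry p q (1 : lp (fun _ : G => H) 2 →L[ℂ] lp (fun _ : G => H) 2)) =
      if p = q then 1 else 0 := by
    intro q
    have := cn_entry_gen ι α 1 1 p q
    rw [cn_pi_eq, cn_pi_one ι hι1, cn_lam_one, one_mul, one_mul, map_one (α p⁻¹)] at this
    rw [this, hL]
  rw [Finset.sum_eq_single p]
  · rw [h1, if_pos rfl]
  · intro q _ hq
    rw [h1, if_neg (Ne.symm hq)]
    simp
  · exact fun h => (h hp).elim

lemma cn_theta_one_le (ι : A →⋆ₙₐ[ℂ] (H →L[ℂ] H)) (hι1 : ι 1 = 1) 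
    (hisom : ∀ a : A, ‖ι a‖ = ‖a‖)
    (α : G → A ≃⋆ₐ[ℂ] A)
    (L : (H →L[ℂ] H) →ₗ[ℂ] A) (hL : ∀ a, L (ι a) = a)
    (F : Finset G) (T : G → A) (hTsa : ∀ s, star (T s) = T s)
    (hT1 : ∑ s ∈ F, T s * T s = 1) (Φ : A →ₗ[ℂ] A) (hΦ : ∀ a, ‖Φ a‖ ≤ ‖a‖)
    (ξ : lp (fun _ : G => H) 2) :
    (inner ℂ ξ (cnTheta ι α L F T Φ 1 ξ)).re ≤ ‖ξ‖ ^ 2 := by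
  have hb : ‖cnPi ι α (Φ 1)‖ ≤ 1 := by
    refine (NonUnitalStarAlgHom.norm_apply_le (cnPi ι α) (Φ 1)).trans ((hΦ 1).trans ?_)
    rw [← hisom, hι1]
    exact ContinuousLinearMap.norm_id_le
  set P : G → (lp (fun _ : G => H) 2 →L[ℂ] lp (fun _ : G => H) 2) :=
    fun p => cnPi ι α (T p) * lam p with hP
  have hPP : ∑ p ∈ F, P p * star (P p) = 1 := by
    have : ∀ p, P p * star (P p) = cnPi ι α (T p * T p) := by
      intro p
      simp only [hP]
      rw [star_mul, cn_lam_star, ← map_star, hTsa, map_mul, mul_assoc, ← mul_assoc (lam p),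
        cn_lam_mul, mul_inv_cancel, cn_lam_one, one_mul]
    simp only [this]
    rw [← map_sum, hT1, cn_pi_one ι hι1]
  have hsum : ∑ p ∈ F, ‖star (P p) ξ‖ ^ 2 = ‖ξ‖ ^ 2 := by
    have h1 : inner ℂ ξ ((∑ p ∈ F, P p * star (P p)) ξ) = ((‖ξ‖ ^ 2 : ℝ) : ℂ) := by
      rw [hPP, one_apply_eq_self, inner_self_eq_norm_sq_to_K]; norm_cast
    rw [_root_.sum_apply, inner_sum] at h1
    have h2 : ∀ p, inner ℂ ξ ((P p * star (P p)) ξ) = ((‖star (P p) ξ‖ ^ 2 : ℝ) : ℂ) := by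
      intro p
      rw [mul_apply_eq_comp, ← ContinuousLinearMap.adjoint_inner_left,
        ← ContinuousLinearMap.star_eq_adjoint, inner_self_eq_norm_sq_to_K]; norm_cast
    simp only [h2] at h1
    exact_mod_cast h1
  rw [cn_theta_one ι hι1 α L hL, _root_.sum_apply, inner_sum, Complex.re_sum, ← hsum]
  refine Finset.sum_le_sum fun p _ => ?_
  show (inner ℂ ξ (P p (cnPi ι α (Φ 1) (star (P p) ξ)))).re ≤ _
  rw [← ContinuousLinearMap.adjoint_inner_left, ← ContinuousLinearMap.star_eq_adjoint]
  generalize star (P p) ξ = η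
  calc (inner ℂ η (cnPi ι α (Φ 1) η)).re ≤ ‖inner ℂ η (cnPi ι α (Φ 1) η)‖ := Complex.re_le_norm _
    _ ≤ ‖η‖ * ‖cnPi ι α (Φ 1) η‖ := norm_inner_le_norm _ _
    _ ≤ ‖η‖ * (1 * ‖η‖) := by
      gcongr
      exact (ContinuousLinearMap.le_opNorm _ _).trans (by gcongr)
    _ = ‖η‖ ^ 2 := by ring

end CN4
end

noncomputable section
open scoped ComplexOrder ENNReal
open Matrix

section CN5

open Filter

set_option linter.unusedSectionVars false

variable {H : Type*} [NormedAddCommGroup H] [InnerProductSpace ℂ H] [CompleteSpace H]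
variable {A : Type*} [CStarAlgebra A] {G : Type*} [Group G]

lemma cn_theta_gen (ι : A →⋆ₙₐ[ℂ] (H →L[ℂ] H))
    (α : G → A ≃⋆ₐ[ℂ] A) (hα : IsAction α)
    (L : (H →L[ℂ] H) →ₗ[ℂ] A) (hL : ∀ a, L (ι a) = a)
    (F : Finset G) (T : G → A) (hF : ∀ s ∉ F, T s = 0) (hTsa : ∀ s, star (T s) = T s)
    (hTc : ∀ s c, Commute (T s) c) (a : A) (t : G) :
    cnTheta ι α L F T LinearMap.id (piRep ι α a * lam t) =
      cnPi ι α (a * ∑ q ∈ F, T (t * q) * α t (T q)) * lam t := by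
  classical
  rw [cn_theta_apply, Finset.sum_comm, Finset.mul_sum, map_sum, Finset.sum_mul]
  refine Finset.sum_congr rfl fun q hq => ?_
  have hmain : (cnPi ι α (T (t * q)) * lam (t * q)) *
      (cnPi ι α ((LinearMap.id : A →ₗ[ℂ] A) (L (cnEntry (t * q) q (piRep ι α a * lam t)))) *
        star (cnPi ι α (T q) * lam q)) = cnPi ι α (a * (T (t * q) * α t (T q))) * lam t := by
    rw [cn_entry_gen, hL, if_pos rfl, cn_sandwich ι α hα, LinearMap.id_apply, ← hα.2,
      mul_inv_cancel, hα.1, mul_inv_cancel_right, hTsa, (hTc (t * q) a).eq, mul_assoc]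
  rw [Finset.sum_eq_single (t * q)]
  · exact hmain
  · intro p _ hp
    rw [cn_entry_gen, hL, if_neg hp]
    simp
  · intro h
    rw [hF _ h]; simp

lemma cn_amen_identity (α : G → A ≃⋆ₐ[ℂ] A)
    (F : Finset G) (T : G → A) (hF : ∀ s ∉ F, T s = 0) (hTsa : ∀ s, star (T s) = T s)
    (hTc : ∀ s c, Commute (T s) c) (hT1 : ∑ s ∈ F, T s * T s = 1) (t : G) :
    ∑ᶠ s : G, star (T s - α t (T (t⁻¹ * s))) * (T s - α t (T (t⁻¹ * s))) =
      (2 : ℂ) • (1 - ∑ q ∈ F, T (t * q) * α t (T q)) := by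
  classical
  have e1 : ∑ᶠ s : G, star (T s - α t (T (t⁻¹ * s))) * (T s - α t (T (t⁻¹ * s))) =
      ∑ᶠ q : G, star (T (t * q) - α t (T q)) * (T (t * q) - α t (T q)) := by
    rw [← finsum_comp_equiv (Equiv.mulLeft t)]
    simp
  have e2 : ∑ s ∈ F.image (fun s => t⁻¹ * s), T (t * s) * T (t * s) = 1 := by
    rw [Finset.sum_image (by intro a _ b _ h; simpa using h)]
    simpa using hT1
  set F' := F ∪ F.image (fun s => t⁻¹ * s) with hF'
  have hF1 : ∀ s ∉ F', T s = 0 := fun s hs => hF s fun h => hs (Finset.mem_union_left _ h)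
  have hF2 : ∀ s ∉ F', T (t * s) = 0 := fun s hs => hF _ fun h =>
    hs (Finset.mem_union_right _ (Finset.mem_image.2 ⟨t * s, h, by group⟩))
  have e3 : ∑ s ∈ F', T (t * s) * T (t * s) = 1 := by
    rw [← e2]
    symm
    refine Finset.sum_subset Finset.subset_union_right fun s _ hs => ?_
    have : T (t * s) = 0 := hF _ fun h => hs (Finset.mem_image.2 ⟨t * s, h, by group⟩)
    rw [this, zero_mul]
  have e4 : ∑ s ∈ F', α t (T s) * α t (T s) = 1 := by
    have h : ∑ s ∈ F', T s * T s = 1 := by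
      rw [← hT1]
      symm
      refine Finset.sum_subset Finset.subset_union_left fun s _ hs => ?_
      rw [hF s hs, zero_mul]
    have h' := congrArg (α t) h
    rw [map_sum, map_one (α t)] at h'
    simpa only [map_mul] using h'
  have e5 : ∑ q ∈ F, T (t * q) * α t (T q) = ∑ q ∈ F', T (t * q) * α t (T q) := by
    refine Finset.sum_subset Finset.subset_union_left fun s _ hs => ?_
    rw [hF s hs, map_zero, mul_zero]
  rw [e1, finsum_eq_sum_of_support_subset (s := F'), e5]
  · have : ∀ q, star (T (t * q) - α t (T q)) * (T (t * q) - α t (T q)) =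
        T (t * q) * T (t * q) + α t (T q) * α t (T q) - (2 : ℂ) • (T (t * q) * α t (T q)) := by
      intro q
      rw [star_sub, hTsa, ← map_star, hTsa, sub_mul, mul_sub, mul_sub, two_smul,
        (hTc (t * q) (α t (T q))).eq]
      abel
    simp only [this]
    rw [Finset.sum_sub_distrib, Finset.sum_add_distrib, e3, e4, ← Finset.smul_sum, smul_sub,
      two_smul ℂ (1 : A)]
  · intro s hs
    by_contra h
    apply hs
    have h1 := hF1 s h
    have h2 := hF2 s h
    simp [h1, h2]

lemma cn_theta_gen_norm (ι : A →⋆ₙₐ[ℂ] (H →L[ℂ] H))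
    (α : G → A ≃⋆ₐ[ℂ] A) (hα : IsAction α)
    (L : (H →L[ℂ] H) →ₗ[ℂ] A) (hL : ∀ a, L (ι a) = a)
    (F : Finset G) (T : G → A) (hF : ∀ s ∉ F, T s = 0) (hTsa : ∀ s, star (T s) = T s)
    (hTc : ∀ s c, Commute (T s) c) (hT1 : ∑ s ∈ F, T s * T s = 1) (a : A) (t : G) :
    ‖cnTheta ι α L F T LinearMap.id (piRep ι α a * lam t) - piRep ι α a * lam t‖ ≤
      ‖a‖ * ‖∑ᶠ s : G, star (T s - α t (T (t⁻¹ * s))) * (T s - α t (T (t⁻¹ * s)))‖ := by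
  rw [cn_theta_gen ι α hα L hL F T hF hTsa hTc, cn_amen_identity α F T hF hTsa hTc hT1, cn_pi_eq,
    ← sub_mul, ← map_sub]
  set W := ∑ q ∈ F, T (t * q) * α t (T q)
  calc ‖cnPi ι α (a * W - a) * lam t‖ ≤ ‖cnPi ι α (a * W - a)‖ * 1 :=
        (norm_mul_le _ _).trans (by gcongr; exact cn_lam_norm t)
    _ ≤ ‖a * W - a‖ := by
        rw [mul_one]; exact NonUnitalStarAlgHom.norm_apply_le (cnPi ι α) _
    _ = ‖a * (1 - W)‖ := by rw [mul_sub, mul_one, norm_sub_rev]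
    _ ≤ ‖a‖ * ‖1 - W‖ := norm_mul_le _ _
    _ ≤ ‖a‖ * ‖(2 : ℂ) • (1 - W)‖ := by
        gcongr
        rw [norm_smul]
        have : ‖(2 : ℂ)‖ = 2 := by norm_num
        rw [this]
        linarith [norm_nonneg (1 - W)]

lemma cn_theta_lim (ι : A →⋆ₙₐ[ℂ] (H →L[ℂ] H)) (α : G → A ≃⋆ₐ[ℂ] A) 
    (L : (H →L[ℂ] H) →ₗ[ℂ] A) (F : Finset G) (T : G → A)
    {I : Type*} (l : Filter I) (Φ : I → A →ₗ[ℂ] A)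
    (hΦ : ∀ a, Tendsto (fun i => ‖Φ i a - a‖) l (nhds 0))
    (x : lp (fun _ : G => H) 2 →L[ℂ] lp (fun _ : G => H) 2) :
    Tendsto (fun i => cnTheta ι α L F T (Φ i) x) l
      (nhds (cnTheta ι α L F T LinearMap.id x)) := by
  simp only [cn_theta_apply]
  refine tendsto_finsetSum _ fun p _ => tendsto_finsetSum _ fun q _ => ?_
  refine Tendsto.mul tendsto_const_nhds (Tendsto.mul ?_ tendsto_const_nhds)
  have h1 : Tendsto (fun i => Φ i (L (cnEntry p q x))) l (nhds (L (cnEntry p q x))) :=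
    tendsto_iff_norm_sub_tendsto_zero.2 (hΦ _)
  refine tendsto_iff_norm_sub_tendsto_zero.2 (squeeze_zero (fun _ => norm_nonneg _) (fun i => ?_)
    (hΦ (L (cnEntry p q x))))
  rw [← map_sub]
  exact NonUnitalStarAlgHom.norm_apply_le (cnPi ι α) _

lemma cn_iter_lim {I J : Type*} [Nonempty I] [SemilatticeSup I] [Nonempty J] [SemilatticeSup J]
    {E : Type*} [NormedAddCommGroup E] (u : I → J → E) (v : J → E) (x : E)
    (h1 : ∀ j, Tendsto (fun i => u i j) atTop (nhds (v j))) (h2 : Tendsto v atTop (nhds x)) :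
    Tendsto (fun k : J × (J → I) => u (k.2 k.1) k.1) atTop (nhds x) := by
  rw [Metric.tendsto_atTop] at h2 ⊢
  intro ε hε
  obtain ⟨j0, hj0⟩ := h2 (ε / 2) (by positivity)
  have h3 : ∀ j, ∃ i0, ∀ i ≥ i0, dist (u i j) (v j) < ε / 2 := fun j =>
    Metric.tendsto_atTop.1 (h1 j) (ε / 2) (by positivity)
  choose i0 hi0 using h3
  refine ⟨(j0, i0), fun k hk => ?_⟩
  calc dist (u (k.2 k.1) k.1) x ≤ dist (u (k.2 k.1) k.1) (v k.1) + dist (v k.1) x :=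
        dist_triangle _ _ _
    _ < ε / 2 + ε / 2 := add_lt_add (hi0 _ _ (hk.2 _)) (hj0 _ hk.1)
    _ = ε := by ring

lemma cn_lim_closure (ι : A →⋆ₙₐ[ℂ] (H →L[ℂ] H)) (α : G → A ≃⋆ₐ[ℂ] A) 
    {I : Type*} (l : Filter I)
    (Θ : I → (lp (fun _ : G => H) 2 →L[ℂ] lp (fun _ : G => H) 2) →ₗ[ℂ]
      (lp (fun _ : G => H) 2 →L[ℂ] lp (fun _ : G => H) 2))
    (hc : ∀ i, ∀ x ∈ CrossedSet ι α, ‖Θ i x‖ ≤ ‖x‖)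
    (hg : ∀ a t, Tendsto (fun i => Θ i (piRep ι α a * lam t)) l (nhds (piRep ι α a * lam t)))
    (x : lp (fun _ : G => H) 2 →L[ℂ] lp (fun _ : G => H) 2) (hx : x ∈ CrossedSet ι α) :
    Tendsto (fun i => ‖Θ i x - x‖) l (nhds 0) := by
  have h0 : ∀ y ∈ Submodule.span ℂ {x | ∃ (a : A) (t : G), x = piRep ι α a * lam t},
      Tendsto (fun i => Θ i y) l (nhds y) := by
    intro y hy
    induction hy using Submodule.span_induction with
    | mem y hy =>
      obtain ⟨a, t, rfl⟩ := hy
      exact hg a t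
    | zero => simpa using tendsto_const_nhds
    | add y z _ _ h1 h2 => simpa using h1.add h2
    | smul c y _ h1 => simpa using h1.const_smul c
  rw [← tendsto_iff_norm_sub_tendsto_zero, Metric.tendsto_nhds]
  intro ε hε
  obtain ⟨y, hy, hxy⟩ := Metric.mem_closure_iff.1 hx (ε / 3) (by positivity)
  have hy' : y ∈ cnS ι α := Submodule.le_topologicalClosure _ hy
  filter_upwards [Metric.tendsto_nhds.1 (h0 y hy) (ε / 3) (by positivity)] with i hi
  have h1 : dist (Θ i x) (Θ i y) ≤ dist x y := by
    rw [dist_eq_norm, dist_eq_norm, ← map_sub]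
    exact hc i _ (Submodule.sub_mem (cnS ι α) hx hy')
  have h2 := dist_triangle4 (Θ i x) (Θ i y) y x
  rw [dist_comm y x] at h2
  linarith

lemma cn_forward (ι : A →⋆ₙₐ[ℂ] (H →L[ℂ] H)) (hisom : ∀ a : A, ‖ι a‖ = ‖a‖)
    (α : G → A ≃⋆ₐ[ℂ] A) (hα : IsAction α) (h : CrossedNuclear ι α) :
    NuclearCStarAlgebra A := by
  classical
  have hinj : Function.Injective ι := (AddMonoidHomClass.isometry_of_norm ι hisom).injective
  obtain ⟨L, hL⟩ := cn_exists_left ι hinj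
  obtain ⟨I, hI, hS, Φ, hcp, hcon, hfin, hlim⟩ := h
  have hent : ∀ a, cnEntry (1 : G) 1 (cnPi ι α a) = ι a := by
    intro a
    have := cn_entry_gen ι α a 1 1 1
    rw [cn_lam_one, mul_one, if_pos (by simp), inv_one, hα.1] at this
    exact this
  have hιL : ∀ x ∈ cnS ι α, ι (L (cnEntry 1 1 x)) = cnEntry 1 1 x := by
    intro x hx
    obtain ⟨a, ha⟩ := cn_entry_mem ι hisom α 1 1 x hx
    rw [← ha, hL]
  have hE : ∀ x ∈ cnS ι α, ‖L (cnEntry 1 1 x)‖ ≤ ‖x‖ := by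
    intro x hx
    rw [← hisom, hιL x hx]
    refine ContinuousLinearMap.opNorm_le_bound _ (norm_nonneg _) fun ξ => ?_
    have n1 : ‖(lpEval (1 : G) : lp (fun _ : G => H) 2 →L[ℂ] H)‖ ≤ 1 :=
      LinearMap.mkContinuous_norm_le _ zero_le_one _
    have n2 : ‖(lpSingle (1 : G) : H →L[ℂ] lp (fun _ : G => H) 2)‖ ≤ 1 :=
      LinearMap.mkContinuous_norm_le _ zero_le_one _
    calc ‖lpEval (1 : G) (x (lpSingle 1 ξ))‖ ≤ 1 * (‖x‖ * (1 * ‖ξ‖)) := by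
          refine (ContinuousLinearMap.le_opNorm (lpEval (H := H) (1 : G)) _).trans ?_
          gcongr
          refine (x.le_opNorm _).trans ?_
          gcongr
          refine (ContinuousLinearMap.le_opNorm (lpSingle (H := H) (1 : G)) _).trans ?_
          gcongr
      _ = ‖x‖ * ‖ξ‖ := by ring
  refine ⟨I, hI, hS, fun i => L ∘ₗ cnEntry 1 1 ∘ₗ Φ i ∘ₗ piRepLin ι α, ?_, ?_, ?_, ?_⟩
  · intro i n M hM
    obtain ⟨N, rfl⟩ := hM
    have h1 : MatPos ((Nᴴ * N).map (cnPi ι α)) := by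
      refine ⟨N.map (cnPi ι α), ?_⟩
      rw [Matrix.map_mul, Matrix.conjTranspose_map]
      exact fun a => map_star (cnPi ι α) a
    have h2 := (hcp i).2 n _ (fun a b => cn_pi_mem ι α _) h1
    have h3 := cn_compress ι hisom α L hL (fun _ : Unit => (1 : G)) _
      (fun a b => (hcp i).1 _ (cn_pi_mem ι α ((Nᴴ * N) a b))) h2
    have h4 := cn_matPos_reindex (Equiv.prodPUnit (Fin n)).symm _ h3
    exact h4
  · intro i a
    refine (hE _ ((hcp i).1 _ (cn_pi_mem ι α a))).trans ((hcon i _ (cn_pi_mem ι α a)).trans ?_)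
    exact NonUnitalStarAlgHom.norm_apply_le (cnPi ι α) a
  · intro i
    have := hfin i
    have hle : LinearMap.range (L ∘ₗ cnEntry 1 1 ∘ₗ Φ i ∘ₗ piRepLin ι α) ≤
        (Submodule.span ℂ ((fun x => Φ i x) '' CrossedSet ι α)).map (L ∘ₗ cnEntry 1 1) := by
      rintro _ ⟨a, rfl⟩
      exact ⟨Φ i (cnPi ι α a), Submodule.subset_span ⟨_, cn_pi_mem ι α a, rfl⟩, rfl⟩
    exact Submodule.finiteDimensional_of_le hle
  · intro a
    refine squeeze_zero (fun _ => norm_nonneg _) (fun i => ?_) (hlim _ (cn_pi_mem ι α a))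
    have h1 : (L ∘ₗ cnEntry 1 1 ∘ₗ Φ i ∘ₗ piRepLin ι α) a - a =
        L (cnEntry (1 : G) 1 (Φ i (cnPi ι α a) - cnPi ι α a)) := by
      rw [map_sub, map_sub, hent, hL]; rfl
    rw [h1]
    exact hE _ (Submodule.sub_mem _ ((hcp i).1 _ (cn_pi_mem ι α a)) (cn_pi_mem ι α a))

lemma cn_backward (ι : A →⋆ₙₐ[ℂ] (H →L[ℂ] H)) (hisom : ∀ a : A, ‖ι a‖ = ‖a‖) (hι1 : ι 1 = 1)
    (α : G → A ≃⋆ₐ[ℂ] A) (hα : IsAction α) (hamen : AmenableAction α)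
    (h : NuclearCStarAlgebra A) : CrossedNuclear ι α := by
  have hinj : Function.Injective ι := (AddMonoidHomClass.isometry_of_norm ι hisom).injective
  obtain ⟨L, hL⟩ := cn_exists_left ι hinj
  obtain ⟨I, hI, hS, Φ, hcp, hcon, hfin, hlim⟩ := h
  obtain ⟨J, hJ, hS', T, hTf, hTc, hTp, hT1, hTlim⟩ := hamen
  have hTsa : ∀ j s, star (T j s) = T j s := by
    intro j s
    obtain ⟨b, hb⟩ := hTp j s
    rw [hb, star_mul, star_star]
  set F : J → Finset G := fun j => (hTf j).toFinset with hFdef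
  have hF : ∀ j, ∀ s ∉ F j, T j s = 0 := by
    intro j s hs
    simpa [hFdef] using hs
  have hT1' : ∀ j, ∑ s ∈ F j, T j s * T j s = 1 := by
    intro j
    rw [← hT1 j, finsum_eq_sum_of_support_subset]
    intro s hs
    by_contra h
    exact hs (by simp [hF j s h])
  have hcpΘ : ∀ k : J × (J → I),
      CPOnCrossed ι α (cnTheta ι α L (F k.1) (T k.1) (Φ (k.2 k.1))) := fun k =>
    cn_theta_cp ι hisom α hα L hL _ _ _ (hcp _)
  have hconΘ : ∀ k : J × (J → I), ∀ x ∈ CrossedSet ι α,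
      ‖cnTheta ι α L (F k.1) (T k.1) (Φ (k.2 k.1)) x‖ ≤ ‖x‖ := fun k =>
    cn_contract ι hι1 α hα _ (hcpΘ k)
      (cn_theta_one_le ι hι1 hisom α L hL _ _ (hTsa _) (hT1' _) _ (hcon _))
  refine ⟨J × (J → I), inferInstance, inferInstance,
    fun k => cnTheta ι α L (F k.1) (T k.1) (Φ (k.2 k.1)), hcpΘ, hconΘ, ?_, ?_⟩
  · intro k
    exact cn_theta_finite ι α L _ _ _ (hfin _) _
  · refine cn_lim_closure ι α _ _ hconΘ fun a t => ?_
    refine cn_iter_lim (fun i j => cnTheta ι α L (F j) (T j) (Φ i) (piRep ι α a * lam t))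
      (fun j => cnTheta ι α L (F j) (T j) LinearMap.id (piRep ι α a * lam t)) _
      (fun j => cn_theta_lim ι α L _ _ _ _ hlim _) ?_
    rw [tendsto_iff_norm_sub_tendsto_zero]
    refine squeeze_zero (fun _ => norm_nonneg _) (fun j =>
      cn_theta_gen_norm ι α hα L hL (F j) (T j) (hF j) (hTsa j) (hTc j) (hT1' j) a t) ?_
    simpa using (hTlim t).const_mul ‖a‖

end CN5
end

noncomputable section
open scoped ComplexOrder ENNReal
open Matrix

/-- **Corollary 4.5.** Let `G` be a discrete group acting amenably by `α` on a unital
C*-algebra `A`.  Then `A ⋊_{α,r} G` is nuclear if and only if `A` is nuclear. -/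
theorem crossedNuclear_iff_nuclear_of_amenable
    {H : Type*} [NormedAddCommGroup H] [InnerProductSpace ℂ H] [CompleteSpace H]
    {A : Type*} [CStarAlgebra A] {G : Type*} [Group G]
    (ι : A →⋆ₙₐ[ℂ] (H →L[ℂ] H)) (hisom : ∀ a : A, ‖ι a‖ = ‖a‖)
    (hnd : NondegenerateRep ι) (hι1 : ι 1 = 1)
    (α : G → A ≃⋆ₐ[ℂ] A) (hα : IsAction α)
    (hamen : AmenableAction α) :
    CrossedNuclear ι α ↔ NuclearCStarAlgebra A := by
  exact ⟨fun h => cn_forward ι hisom α hα h, fun h => cn_backward ι hisom hι1 α hα hamen h⟩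

end
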